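/- arXiv:1607.00550 — 3 statements merged into one kernel-verified Lean document; each statement's English description precedes it below -/
import Mathlib

section
/- Suppose W is uniformly distributed on [0,1] and, given W = w, the samples X_1,…,X_n are i.i.d. Bernoulli(w). Let R_B(n) = inf_ψ E|W − ψ(X^n)| be the Bayes risk with respect to the absolute distortion ℓ(w,ŵ) = |w − ŵ|. Then liminf_{n→∞} 16 √(2πn) · R_B(n) ≥ 1; that is, R_B(n) is asymptotically at least 1/(16 √(2πn)). -/
open MeasureTheory ProbabilityTheory Real

attribute [local instance] Classical.propDecidable
open scoped ENNReal NNReal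

noncomputable section
namespace DecEst

variable {Ω α β γ : Type*}


/-- Bayes risk: infimum of the expected distortion over all measurable estimators. -/
def bayesRisk [MeasurableSpace Ω] [MeasurableSpace α] [MeasurableSpace β]
    (μ : Measure Ω) (W : Ω → α) (X : Ω → β) (ℓ : α → α → ℝ) : ℝ :=
  ⨅ ψ : {ψ : β → α // Measurable ψ}, ∫ ω, ℓ (W ω) (ψ.1 (X ω)) ∂μ

/-- Bernoulli distribution on `Bool`. -/
def bern (p : ℝ) : Measure Bool :=
  (ENNReal.ofReal p) • Measure.dirac true + (ENNReal.ofReal (1 - p)) • Measure.dirac false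


/-- The Bayes risk `R_B(n)` for estimating, under absolute distortion, a parameter `W`
uniformly distributed on `[0,1]` from `n` samples that are i.i.d. `Bernoulli(w)` given
`W = w` (infimum over all realizations of this joint distribution; they all share the
same Bayes risk). -/
def bernoulliBiasBayesRisk (n : ℕ) : ℝ :=
  sInf {r : ℝ |
    ∃ (Ω : Type) (_ : MeasurableSpace Ω) (μ : Measure Ω) (_ : IsProbabilityMeasure μ)
      (W : Ω → ℝ) (X : Ω → Fin n → Bool),
      Measurable W ∧ Measurable X ∧
      μ.map W = volume.restrict (Set.Icc (0 : ℝ) 1) ∧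
      (∀ᵐ w ∂(μ.map W), condDistrib X W μ w = Measure.pi fun _ : Fin n => bern w) ∧
      r = bayesRisk μ W X fun w w' => |w - w'|}

/-- Likelihood. -/
def lik {n : ℕ} (x : Fin n → Bool) (w : ℝ) : ℝ := ∏ i, cond (x i) w (1 - w)

lemma sum_prod_bool (n : ℕ) (g : Bool → ℝ) :
    ∑ x : Fin n → Bool, ∏ i, g (x i) = (g true + g false) ^ n := by
  have h := Finset.prod_univ_sum (ι := Fin n) (κ := fun _ => Bool)
    (fun _ => Finset.univ) (fun _ b => g b)
  rw [Fintype.piFinset_univ] at h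
  rw [← h]
  simp

lemma lik_cont {n : ℕ} (x : Fin n → Bool) : Continuous (lik x) := by
  unfold lik
  refine continuous_finsetProd _ fun i _ => ?_
  cases x i
  · exact continuous_const.sub continuous_id
  · exact continuous_id

lemma lik_nonneg {n : ℕ} (x : Fin n → Bool) {w : ℝ} (h0 : 0 ≤ w) (h1 : w ≤ 1) :
    0 ≤ lik x w := by
  refine Finset.prod_nonneg fun i _ => ?_
  cases x i
  · simpa using h1
  · simpa using h0

lemma lik_pos {n : ℕ} (x : Fin n → Bool) {w : ℝ} (h0 : 0 < w) (h1 : w < 1) :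
    0 < lik x w := by
  refine Finset.prod_pos fun i _ => ?_
  cases x i
  · simpa using h1
  · simpa using h0

lemma lik_sum (n : ℕ) (w : ℝ) : ∑ x : Fin n → Bool, lik x w = 1 := by
  have := sum_prod_bool n (fun b => cond b w (1 - w))
  simpa [lik] using this

/-- Conditional risk. -/
def crisk {n : ℕ} (ψ : (Fin n → Bool) → ℝ) (w : ℝ) : ℝ := ∑ x, lik x w * |w - ψ x|

lemma crisk_cont {n : ℕ} (ψ : (Fin n → Bool) → ℝ) : Continuous (crisk ψ) := by
  unfold crisk
  refine continuous_finsetSum _ fun x _ => (lik_cont x).mul ?_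
  exact (continuous_id.sub continuous_const).abs

lemma crisk_nonneg {n : ℕ} (ψ : (Fin n → Bool) → ℝ) {w : ℝ} (h0 : 0 ≤ w) (h1 : w ≤ 1) :
    0 ≤ crisk ψ w :=
  Finset.sum_nonneg fun x _ => mul_nonneg (lik_nonneg x h0 h1) (abs_nonneg _)

lemma bern_prob {w : ℝ} (h0 : 0 ≤ w) (h1 : w ≤ 1) : IsProbabilityMeasure (bern w) := by
  constructor
  simp only [bern, Measure.coe_add, Measure.coe_smul, Pi.add_apply, Pi.smul_apply,
    measure_univ, smul_eq_mul, mul_one]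
  rw [← ENNReal.ofReal_add h0 (by linarith)]
  simp

lemma bern_singleton {w : ℝ} (b : Bool) :
    bern w {b} = ENNReal.ofReal (cond b w (1 - w)) := by
  cases b <;> simp [bern]

lemma pi_bern_singleton {n : ℕ} {w : ℝ} (h0 : 0 ≤ w) (h1 : w ≤ 1) (x : Fin n → Bool) :
    (Measure.pi fun _ : Fin n => bern w) {x} = ENNReal.ofReal (lik x w) := by
  have := bern_prob h0 h1
  rw [Measure.pi_singleton]
  simp only [bern_singleton, lik]
  rw [ENNReal.ofReal_prod_of_nonneg]
  intro i _
  cases x i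
  · simpa using h1
  · simpa using h0

lemma risk_eq {n : ℕ} {Ω : Type} [MeasurableSpace Ω] (μ : Measure Ω) [IsProbabilityMeasure μ]
    (W : Ω → ℝ) (X : Ω → Fin n → Bool) (hW : Measurable W) (hX : Measurable X)
    (hu : μ.map W = volume.restrict (Set.Icc (0 : ℝ) 1))
    (hc : ∀ᵐ w ∂(μ.map W), condDistrib X W μ w = Measure.pi fun _ : Fin n => bern w)
    (ψ : (Fin n → Bool) → ℝ) :
    ∫ ω, |W ω - ψ (X ω)| ∂μ = ∫ w in Set.Icc (0 : ℝ) 1, crisk ψ w := by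
  have hψ : Measurable ψ := measurable_of_finite ψ
  have hF : Measurable (fun p : ℝ × (Fin n → Bool) => |p.1 - ψ p.2|) := by
    have : Measurable (fun p : ℝ × (Fin n → Bool) => p.1 - ψ p.2) :=
      measurable_fst.sub (hψ.comp measurable_snd)
    exact measurable_abs.comp this
  have hWb : ∀ᵐ ω ∂μ, W ω ∈ Set.Icc (0 : ℝ) 1 := by
    have : ∀ᵐ w ∂(μ.map W), w ∈ Set.Icc (0 : ℝ) 1 := by
      rw [hu]; exact ae_restrict_mem measurableSet_Icc
    exact ae_of_ae_map hW.aemeasurable this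
  have hI : Integrable (fun ω => |W ω - ψ (X ω)|) μ := by
    refine Integrable.of_bound (C := 1 + ∑ x, |ψ x|)
      (hF.comp (hW.prodMk hX)).aestronglyMeasurable ?_
    filter_upwards [hWb] with ω hω
    have h1 : |ψ (X ω)| ≤ ∑ x, |ψ x| :=
      Finset.single_le_sum (f := fun x => |ψ x|) (fun _ _ => abs_nonneg _) (Finset.mem_univ _)
    have h2 := abs_sub (W ω) (ψ (X ω))
    have h3 : |W ω| ≤ 1 := abs_le.2 ⟨by linarith [hω.1], hω.2⟩
    rw [Real.norm_eq_abs, abs_abs]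
    linarith
  have hmap : μ.map W ⊗ₘ condDistrib X W μ = μ.map (fun ω => (W ω, X ω)) :=
    compProd_map_condDistrib hX.aemeasurable
  have hI2 : Integrable (fun p : ℝ × (Fin n → Bool) => |p.1 - ψ p.2|)
      (μ.map W ⊗ₘ condDistrib X W μ) := by
    rw [hmap]
    exact (integrable_map_measure hF.aestronglyMeasurable
      (hW.prodMk hX).aemeasurable).2 hI
  have e1 : ∫ ω, |W ω - ψ (X ω)| ∂μ
      = ∫ p, |p.1 - ψ p.2| ∂(μ.map W ⊗ₘ condDistrib X W μ) := by
    rw [hmap, integral_map (hW.prodMk hX).aemeasurable hF.aestronglyMeasurable]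
  rw [e1, Measure.integral_compProd hI2, ← hu]
  refine integral_congr_ae ?_
  have hm : ∀ᵐ w ∂(μ.map W), w ∈ Set.Icc (0 : ℝ) 1 := by
    rw [hu]; exact ae_restrict_mem measurableSet_Icc
  filter_upwards [hc, hm] with w hw hw1
  rw [hw]
  have := bern_prob hw1.1 hw1.2
  rw [integral_fintype Integrable.of_finite]
  unfold crisk
  refine Finset.sum_congr rfl fun x _ => ?_
  rw [Measure.real, pi_bern_singleton hw1.1 hw1.2, ENNReal.toReal_ofReal
    (lik_nonneg x hw1.1 hw1.2), smul_eq_mul]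

lemma min_ineq {P Q : ℝ} (hP : 0 < P) (hQ : 0 ≤ Q) {a b : ℝ} (ha : 0 ≤ a) (hb : 0 ≤ b) {d : ℝ}
    (hd : 0 ≤ d) (hab : d ≤ a + b) : d * (Q - Q ^ 2 / P / 4) ≤ P * a + Q * b := by
  have h1 : Q - Q ^ 2 / P / 4 ≤ Q := by
    have : 0 ≤ Q ^ 2 / P := by positivity
    linarith
  have h2 : Q - Q ^ 2 / P / 4 ≤ P := by
    have : Q ^ 2 / P / 4 - Q + P = (Q / 2 - P) ^ 2 / P := by field_simp; ring
    have h3 : 0 ≤ (Q / 2 - P) ^ 2 / P := by positivity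
    linarith
  set m := Q - Q ^ 2 / P / 4
  rcases le_total m 0 with hm | hm
  · have : d * m ≤ 0 := mul_nonpos_of_nonneg_of_nonpos hd hm
    have := mul_nonneg hP.le ha
    have := mul_nonneg hQ hb
    linarith
  · have := mul_le_mul_of_nonneg_right hab hm
    have := mul_le_mul_of_nonneg_right h1 hb
    have := mul_le_mul_of_nonneg_right h2 ha
    nlinarith

lemma chi_sum (n : ℕ) {w δ : ℝ} (h0 : 0 < w) (h1 : w < 1) :
    ∑ x : Fin n → Bool, lik x (w + δ) ^ 2 / lik x w = (1 + δ ^ 2 / (w * (1 - w))) ^ n := by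
  have := sum_prod_bool n (fun b => (cond b (w + δ) (1 - (w + δ))) ^ 2 / cond b w (1 - w))
  simp only [Finset.prod_div_distrib, Finset.prod_pow] at this
  unfold lik
  rw [this]
  congr 1
  have : 1 - w ≠ 0 := by linarith
  simp only [cond_true, cond_false]
  field_simp
  ring

lemma crisk_pair {n : ℕ} (hn : 0 < n) (ψ : (Fin n → Bool) → ℝ) {w δ : ℝ} (hδ : δ = 1 / (3 * √n))
    (hδ4 : δ ≤ 1 / 4) (h0 : 1 / 4 ≤ w) (h1 : w ≤ 3 / 4) :
    δ / 2 ≤ crisk ψ w + crisk ψ (w + δ) := by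
  have hn' : (0 : ℝ) < n := by exact_mod_cast hn
  have hδ0 : 0 ≤ δ := by rw [hδ]; positivity
  have hδ2 : δ ^ 2 = 1 / (9 * n) := by
    rw [hδ, div_pow, mul_pow, Real.sq_sqrt hn'.le]; norm_num
  have hchi : (1 + δ ^ 2 / (w * (1 - w))) ^ n ≤ 2 := by
    have hw : 3 / 16 ≤ w * (1 - w) := by nlinarith
    have h2 : δ ^ 2 / (w * (1 - w)) ≤ (16 / 27) / n := by
      rw [hδ2, div_le_iff₀ (by linarith)]
      have : (1 : ℝ) / (9 * n) = 16 / 27 / n * (3 / 16) := by field_simp; norm_num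
      rw [this]
      exact mul_le_mul_of_nonneg_left hw (by positivity)
    have h3 : (1 + δ ^ 2 / (w * (1 - w))) ≤ Real.exp ((16 / 27) / n) := by
      have := Real.add_one_le_exp ((16 / 27 : ℝ) / n)
      linarith
    have h4 : 0 ≤ (1 + δ ^ 2 / (w * (1 - w))) := by positivity
    calc _ ≤ (Real.exp ((16 / 27) / n)) ^ n := pow_le_pow_left₀ h4 h3 n
      _ = Real.exp (16 / 27) := by
        rw [← Real.exp_nat_mul]; congr 1; field_simp
      _ ≤ Real.exp (Real.log 2) := by
        apply Real.exp_le_exp.2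
        have := Real.log_two_gt_d9
        linarith
      _ = 2 := Real.exp_log (by norm_num)
  have key : ∀ x : Fin n → Bool, δ * (lik x (w + δ) - lik x (w + δ) ^ 2 / lik x w / 4)
      ≤ lik x w * |w - ψ x| + lik x (w + δ) * |w + δ - ψ x| := by
    intro x
    refine min_ineq (lik_pos x (by linarith) (by linarith))
      (lik_nonneg x (by linarith) (by linarith)) (abs_nonneg _) (abs_nonneg _) hδ0 ?_
    have := neg_abs_le (w - ψ x)
    have := le_abs_self (w + δ - ψ x)
    have := le_abs_self (w - ψ x)
    linarith
  have hs := Finset.sum_le_sum fun x (_ : x ∈ Finset.univ) => key x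
  rw [Finset.sum_add_distrib, ← Finset.mul_sum, Finset.sum_sub_distrib, lik_sum,
    ← Finset.sum_div, chi_sum n (by linarith) (by linarith)] at hs
  unfold crisk
  nlinarith

lemma lower_int {n : ℕ} (hn : 2 ≤ n) (ψ : (Fin n → Bool) → ℝ) :
    1 / (24 * √n) ≤ ∫ w in Set.Icc (0 : ℝ) 1, crisk ψ w := by
  have hn' : (2 : ℝ) ≤ n := by exact_mod_cast hn
  obtain ⟨δ, hδ⟩ : ∃ δ : ℝ, δ = 1 / (3 * √n) := ⟨_, rfl⟩
  have hδ0 : 0 ≤ δ := by rw [hδ]; positivity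
  have hs : 4 / 3 ≤ √(n : ℝ) := Real.le_sqrt_of_sq_le (by linarith)
  have hδ4 : δ ≤ 1 / 4 := by
    rw [hδ]
    apply one_div_le_one_div_of_le <;> linarith
  have hc := crisk_cont ψ
  rw [integral_Icc_eq_integral_Ioc, ← intervalIntegral.integral_of_le zero_le_one]
  have mono : ∀ a b : ℝ, 0 ≤ a → a ≤ b → b ≤ 1 →
      ∫ w in a..b, crisk ψ w ≤ ∫ w in (0:ℝ)..1, crisk ψ w := by
    intro a b ha hab hb
    refine intervalIntegral.integral_mono_interval ha hab hb ?_ (hc.intervalIntegrable _ _)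
    refine (ae_restrict_mem measurableSet_Ioc).mono fun w hw => ?_
    exact crisk_nonneg ψ hw.1.le hw.2
  have m1 := mono (1/4) (3/4) (by norm_num) (by norm_num) (by norm_num)
  have m2 := mono (1/4 + δ) (3/4 + δ) (by linarith) (by linarith) (by linarith)
  rw [← intervalIntegral.integral_comp_add_right (fun w => crisk ψ w)] at m2
  have hc2 : Continuous fun w => crisk ψ (w + δ) := hc.comp (continuous_id.add continuous_const)
  have h := intervalIntegral.integral_mono_on (μ := volume) (a := 1/4) (b := 3/4)
    (f := fun _ => δ / 2)
    (g := fun w => crisk ψ w + crisk ψ (w + δ)) (by norm_num)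
    (continuous_const.intervalIntegrable _ _) ((hc.add hc2).intervalIntegrable _ _)
    (fun w hw => crisk_pair (by omega) ψ hδ hδ4 hw.1 hw.2)
  rw [intervalIntegral.integral_add (hc.intervalIntegrable _ _) (hc2.intervalIntegrable _ _)] at h
  simp only [intervalIntegral.integral_const, smul_eq_mul] at h
  have : 1 / (24 * √(n : ℝ)) = δ / 8 := by rw [hδ]; field_simp; norm_num
  rw [this]
  linarith

lemma mgf_bound {n : ℕ} (hn : 0 < n) {w s : ℝ} (h0 : 0 ≤ w) (h1 : w ≤ 1) (hs : s ^ 2 = 1 / n) :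
    ∑ x : Fin n → Bool, lik x w * Real.exp (∑ i, s * (cond (x i) 1 0 - w)) ≤ Real.exp 1 := by
  have hn' : (1 : ℝ) ≤ n := by exact_mod_cast hn
  have := sum_prod_bool n (fun b => cond b w (1 - w) * Real.exp (s * (cond b 1 0 - w)))
  simp only [Finset.prod_mul_distrib] at this
  simp only [Real.exp_sum]
  unfold lik
  rw [this]
  have hs1 : |s| ≤ 1 := by
    rw [← sq_le_one_iff_abs_le_one, hs, div_le_one (by linarith)]
    exact hn'
  have hexp : ∀ y : ℝ, |y| ≤ 1 → Real.exp (s * y) ≤ 1 + s * y + s ^ 2 := by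
    intro y hy
    have h2 : |s * y| ≤ 1 := by
      rw [abs_mul]; exact mul_le_one₀ hs1 (abs_nonneg _) hy
    have h3 := (abs_le.1 (Real.abs_exp_sub_one_sub_id_le h2)).2
    have h4 : y ^ 2 ≤ 1 := (sq_le_one_iff_abs_le_one y).2 hy
    have h5 : (s * y) ^ 2 ≤ s ^ 2 := by
      rw [mul_pow]; exact mul_le_of_le_one_right (sq_nonneg _) h4
    linarith
  simp only [cond_true, cond_false]
  have ht := mul_le_mul_of_nonneg_left (hexp (1 - w) (abs_le.2 ⟨by linarith, by linarith⟩)) h0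
  have hf := mul_le_mul_of_nonneg_left (hexp (0 - w) (abs_le.2 ⟨by linarith, by linarith⟩))
    (sub_nonneg.2 h1)
  have hle : w * Real.exp (s * (1 - w)) + (1 - w) * Real.exp (s * (0 - w))
      ≤ Real.exp (1 / n) := by
    have := Real.add_one_le_exp ((1 : ℝ) / n)
    rw [← hs] at this ⊢
    nlinarith
  have hnn : 0 ≤ w * Real.exp (s * (1 - w)) + (1 - w) * Real.exp (s * (0 - w)) := by
    have := sub_nonneg.2 h1
    positivity
  calc _ ≤ (Real.exp (1 / n)) ^ n := pow_le_pow_left₀ hnn hle n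
    _ = Real.exp 1 := by
      rw [← Real.exp_nat_mul]; congr 1; field_simp

/-- Empirical mean. -/
def emean {n : ℕ} (x : Fin n → Bool) : ℝ := (∑ i, cond (x i) (1 : ℝ) 0) / n

lemma crisk_emean {n : ℕ} (hn : 0 < n) {w : ℝ} (h0 : 0 ≤ w) (h1 : w ≤ 1) :
    √n * crisk (emean (n := n)) w ≤ 2 * Real.exp 1 := by
  have hn' : (0 : ℝ) < n := by exact_mod_cast hn
  have hq : 0 < √(n : ℝ) := Real.sqrt_pos.2 hn'
  have hqq : √(n : ℝ) ^ 2 = n := Real.sq_sqrt hn'.le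
  have b1 := mgf_bound hn (w := w) (s := 1 / √n) h0 h1 (by rw [div_pow, hqq, one_pow])
  have b2 := mgf_bound hn (w := w) (s := -(1 / √n)) h0 h1 (by rw [neg_sq, div_pow, hqq, one_pow])
  have key : √n * crisk (emean (n := n)) w ≤
      ∑ x : Fin n → Bool, lik x w * Real.exp (∑ i, (1 / √n) * (cond (x i) 1 0 - w)) +
      ∑ x : Fin n → Bool, lik x w * Real.exp (∑ i, (-(1 / √n)) * (cond (x i) 1 0 - w)) := by
    rw [← Finset.sum_add_distrib, crisk, Finset.mul_sum]
    refine Finset.sum_le_sum fun x _ => ?_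
    rw [← mul_add, mul_left_comm]
    refine mul_le_mul_of_nonneg_left ?_ (lik_nonneg x h0 h1)
    have e : ∀ s : ℝ, ∑ i, s * ((cond (x i) 1 0 : ℝ) - w) = s * n * (emean x - w) := by
      intro s
      rw [← Finset.mul_sum, Finset.sum_sub_distrib]
      simp only [Finset.sum_const, Finset.card_univ, Fintype.card_fin, nsmul_eq_mul, emean]
      field_simp
    rw [e, e]
    have e2 : 1 / √(n : ℝ) * n = √n := by
      field_simp; exact hqq.symm
    have e3 : -(1 / √(n : ℝ)) * n = -√n := by rw [neg_mul, e2]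
    rw [e2, e3]
    have h2 : √(n : ℝ) * |w - emean x| = |√n * (emean x - w)| := by
      rw [abs_mul, abs_of_pos hq, abs_sub_comm]
    rw [h2, neg_mul]
    set t := √(n : ℝ) * (emean x - w)
    have := Real.add_one_le_exp t
    have := Real.add_one_le_exp (-t)
    have := Real.exp_pos t
    have := Real.exp_pos (-t)
    exact abs_le.2 ⟨by linarith, by linarith⟩
  linarith

/-- Clamp. -/
def clamp (w : ℝ) : ℝ := max 0 (min 1 w)

lemma clamp_nonneg (w : ℝ) : 0 ≤ clamp w := le_max_left _ _
lemma clamp_le (w : ℝ) : clamp w ≤ 1 := max_le zero_le_one (min_le_left _ _)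
lemma clamp_meas : Measurable clamp :=
  (continuous_const.max (continuous_const.min continuous_id)).measurable
lemma clamp_eq {w : ℝ} (h : w ∈ Set.Icc (0 : ℝ) 1) : clamp w = w := by
  simp [clamp, h.1, h.2]

/-- The sampling kernel. -/
def ker (n : ℕ) : Kernel ℝ (Fin n → Bool) where
  toFun w := Measure.pi fun _ : Fin n => bern (clamp w)
  measurable' := by
    refine Measure.measurable_of_measurable_coe _ fun s _ => ?_
    have : ∀ w, (Measure.pi fun _ : Fin n => bern (clamp w)) s
        = ∑ x ∈ s.toFinset, ENNReal.ofReal (lik x (clamp w)) := by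
      intro w
      conv_lhs => rw [← Set.coe_toFinset s]
      rw [← sum_measure_singleton]
      exact Finset.sum_congr rfl fun x _ =>
        pi_bern_singleton (clamp_nonneg w) (clamp_le w) x
    simp only [this]
    exact Finset.measurable_sum _ fun x _ =>
      ((lik_cont x).measurable.comp clamp_meas).ennreal_ofReal

instance (n : ℕ) : IsMarkovKernel (ker n) := by
  constructor
  intro w
  have := bern_prob (clamp_nonneg w) (clamp_le w)
  change IsProbabilityMeasure (Measure.pi fun _ : Fin n => bern (clamp w))
  infer_instance

lemma exists_real (n : ℕ) :
    ∃ (Ω : Type) (_ : MeasurableSpace Ω) (μ : Measure Ω) (_ : IsProbabilityMeasure μ)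
      (W : Ω → ℝ) (X : Ω → Fin n → Bool),
      Measurable W ∧ Measurable X ∧
      μ.map W = volume.restrict (Set.Icc (0 : ℝ) 1) ∧
      (∀ᵐ w ∂(μ.map W), condDistrib X W μ w = Measure.pi fun _ : Fin n => bern w) := by
  have : IsProbabilityMeasure ((volume : Measure ℝ).restrict (Set.Icc (0 : ℝ) 1)) := by
    constructor; simp
  have hm : ((volume.restrict (Set.Icc (0 : ℝ) 1)) ⊗ₘ ker n).map Prod.fst
      = volume.restrict (Set.Icc (0 : ℝ) 1) := Measure.fst_compProd _ _
  refine ⟨ℝ × (Fin n → Bool), inferInstance, (volume.restrict (Set.Icc (0 : ℝ) 1)) ⊗ₘ ker n,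
    inferInstance, Prod.fst, Prod.snd, measurable_fst, measurable_snd, hm, ?_⟩
  have h := condDistrib_ae_eq_of_measure_eq_compProd
    (μ := (volume.restrict (Set.Icc (0 : ℝ) 1)) ⊗ₘ ker n) (Y := Prod.snd) Prod.fst
    measurable_snd.aemeasurable (κ := ker n) (by
      rw [hm]; exact Measure.map_id)
  have hmem : ∀ᵐ w ∂(((volume.restrict (Set.Icc (0 : ℝ) 1)) ⊗ₘ ker n).map Prod.fst),
      w ∈ Set.Icc (0 : ℝ) 1 := by
    rw [hm]; exact ae_restrict_mem measurableSet_Icc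
  filter_upwards [h, hmem] with w hw hw1
  rw [hw]
  change (Measure.pi fun _ : Fin n => bern (clamp w)) = _
  rw [clamp_eq hw1]

lemma risk_lower {n : ℕ} (hn : 2 ≤ n) : 1 / (24 * √n) ≤ bernoulliBiasBayesRisk n := by
  obtain ⟨Ω, m, μ, hμ, W, X, hW, hX, hu, hc⟩ := exists_real n
  refine le_csInf ⟨_, Ω, m, μ, hμ, W, X, hW, hX, hu, hc, rfl⟩ ?_
  rintro r ⟨Ω, m, μ, hμ, W, X, hW, hX, hu, hc, rfl⟩
  have : Nonempty {ψ : (Fin n → Bool) → ℝ // Measurable ψ} := ⟨⟨fun _ => 0, measurable_const⟩⟩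
  refine le_ciInf fun ψ => ?_
  rw [risk_eq μ W X hW hX hu hc ψ.1]
  exact lower_int hn ψ.1

lemma risk_upper {n : ℕ} (hn : 0 < n) : √n * bernoulliBiasBayesRisk n ≤ 2 * Real.exp 1 := by
  have hn' : (0 : ℝ) < n := by exact_mod_cast hn
  have hq : 0 < √(n : ℝ) := Real.sqrt_pos.2 hn'
  obtain ⟨Ω, m, μ, hμ, W, X, hW, hX, hu, hc⟩ := exists_real n
  have h1 : bernoulliBiasBayesRisk n ≤ bayesRisk μ W X fun w w' => |w - w'| := by
    refine csInf_le ⟨0, ?_⟩ ⟨Ω, m, μ, hμ, W, X, hW, hX, hu, hc, rfl⟩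
    rintro r ⟨Ω, m, μ, hμ, W, X, hW, hX, hu, hc, rfl⟩
    exact Real.iInf_nonneg fun ψ => integral_nonneg fun _ => abs_nonneg _
  have h2 : (bayesRisk μ W X fun w w' => |w - w'|) ≤ ∫ ω, |W ω - emean (X ω)| ∂μ :=
    ciInf_le (f := fun ψ : {ψ : (Fin n → Bool) → ℝ // Measurable ψ} =>
      ∫ ω, |W ω - ψ.1 (X ω)| ∂μ)
      ⟨0, by rintro _ ⟨ψ, rfl⟩; exact integral_nonneg fun _ => abs_nonneg _⟩
      ⟨emean, measurable_of_finite _⟩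
  rw [risk_eq μ W X hW hX hu hc] at h2
  have h3 : ∫ w in Set.Icc (0 : ℝ) 1, crisk (emean (n := n)) w ≤ 2 * Real.exp 1 / √n := by
    have := setIntegral_mono_on (μ := volume) (s := Set.Icc (0 : ℝ) 1)
      (f := crisk (emean (n := n))) (g := fun _ => 2 * Real.exp 1 / √n)
      (crisk_cont _).integrableOn_Icc continuous_const.integrableOn_Icc measurableSet_Icc
      (fun w hw => by
        rw [le_div_iff₀ hq, mul_comm]
        exact crisk_emean hn hw.1 hw.2)
    simpa using this
  have h4 := (h1.trans h2).trans h3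
  rwa [le_div_iff₀ hq, mul_comm] at h4

/-- Corollary 2. Estimating a Bernoulli bias with a uniform prior:
the Bayes risk satisfies `R_B(n) ≳ 1/(16 √(2 π n))` as `n → ∞`, i.e.
`liminf_{n→∞} 16 √(2 π n) R_B(n) ≥ 1`. -/
theorem bayes_risk_bernoulli_bias_uniform_prior :
    1 ≤ Filter.liminf
      (fun n : ℕ => 16 * Real.sqrt (2 * π * n) * bernoulliBiasBayesRisk n)
      Filter.atTop := by
  have hsplit : ∀ n : ℕ, √(2 * π * n) = √(2 * π) * √n := fun n =>
    Real.sqrt_mul (by positivity) _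
  refine Filter.le_liminf_of_le ?_ ?_
  · refine Filter.IsBoundedUnder.isCoboundedUnder_ge ?_
    refine Filter.isBoundedUnder_of_eventually_le (a := 16 * √(2 * π) * (2 * Real.exp 1)) ?_
    filter_upwards [Filter.eventually_ge_atTop 1] with n hn
    rw [hsplit, ← mul_assoc, mul_assoc]
    exact mul_le_mul_of_nonneg_left (risk_upper hn) (by positivity)
  · filter_upwards [Filter.eventually_ge_atTop 2] with n hn
    have hn' : (0 : ℝ) < n := by exact_mod_cast (by omega : 0 < n)
    have hq : 0 < √(n : ℝ) := Real.sqrt_pos.2 hn'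
    have h := mul_le_mul_of_nonneg_left (risk_lower hn)
      (by positivity : 0 ≤ 16 * √(2 * π * n))
    refine le_trans ?_ h
    have h2 : 3 / 2 ≤ √(2 * π) := Real.le_sqrt_of_sq_le (by linarith [Real.pi_gt_three])
    rw [hsplit, mul_one_div, le_div_iff₀ (by positivity)]
    nlinarith



end DecEst
end
end

section
/- If W − Z − X^n form a Markov chain, then the SDPI constants satisfy η(P_{X^n}, P_{W|X^n}) ≤ η(P_Z, P_{W|Z}). In particular this holds when Z is any sufficient statistic of X^n for estimating W. -/
open MeasureTheory ProbabilityTheory Real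

attribute [local instance] Classical.propDecidable
open scoped ENNReal NNReal

noncomputable section
namespace DecEst

variable {Ω α β γ : Type*}


/-- Kullback–Leibler divergence in bits. -/
def klDiv2 [MeasurableSpace α] (ν μ' : Measure α) : ℝ≥0∞ :=
  if ν ≪ μ' ∧ Integrable (fun x => Real.logb 2 ((ν.rnDeriv μ' x).toReal)) ν then
    ENNReal.ofReal (∫ x, Real.logb 2 ((ν.rnDeriv μ' x).toReal) ∂ν)
  else ⊤

/-- SDPI constant of a channel `K` at input distribution `π`. -/
def eta [MeasurableSpace α] [MeasurableSpace β] (pp : Measure α) (K : Kernel α β) : ℝ≥0∞ :=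
  ⨆ (ν : Measure α) (_ : IsProbabilityMeasure ν) (_ : ν ≠ pp),
    klDiv2 (ν.bind K) (pp.bind K) / klDiv2 ν pp


open InformationTheory in
lemma klDiv2_eq_klDiv [MeasurableSpace α] (ν μ' : Measure α) [IsProbabilityMeasure ν]
    [IsProbabilityMeasure μ'] :
    klDiv2 ν μ' = klDiv ν μ' * ENNReal.ofReal (Real.log 2)⁻¹ := by
  have hlog : 0 < (Real.log 2)⁻¹ := inv_pos.mpr (Real.log_pos (by norm_num))
  have hfun : (fun x => Real.logb 2 ((ν.rnDeriv μ' x).toReal))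
      = fun x => llr ν μ' x * (Real.log 2)⁻¹ := by
    ext x
    simp [Real.logb, llr, div_eq_mul_inv]
  unfold klDiv2
  rw [klDiv_def, hfun]
  have hint : Integrable (fun x => llr ν μ' x * (Real.log 2)⁻¹) ν ↔ Integrable (llr ν μ') ν :=
    integrable_mul_const_iff (isUnit_iff_ne_zero.mpr hlog.ne') _
  rw [hint]
  split_ifs with h
  · rw [integral_mul_const, ENNReal.ofReal_mul' hlog.le]
    simp
  · rw [ENNReal.top_mul]
    simpa using hlog

open InformationTheory in
lemma klDiv_withDensity_comp [MeasurableSpace Ω] [MeasurableSpace α] (μ : Measure Ω)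
    [IsProbabilityMeasure μ] {X : Ω → α} (hX : Measurable X) (ν : Measure α)
    [IsProbabilityMeasure ν] (hν : ν ≪ μ.map X)
    [IsProbabilityMeasure (μ.withDensity (fun ω => ν.rnDeriv (μ.map X) (X ω)))] :
    klDiv (μ.withDensity (fun ω => ν.rnDeriv (μ.map X) (X ω))) μ = klDiv ν (μ.map X) := by
  have : IsProbabilityMeasure (μ.map X) := Measure.isProbabilityMeasure_map hX.aemeasurable
  have hf : Measurable (ν.rnDeriv (μ.map X)) := Measure.measurable_rnDeriv _ _
  rw [klDiv_eq_lintegral_klFun_of_ac (withDensity_absolutelyContinuous _ _),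
    klDiv_eq_lintegral_klFun_of_ac hν, lintegral_map (by fun_prop) hX]
  refine lintegral_congr_ae ?_
  filter_upwards [Measure.rnDeriv_withDensity μ (hf.comp hX)] with ω hω
  have hω' : (μ.withDensity (fun ω => ν.rnDeriv (μ.map X) (X ω))).rnDeriv μ ω
    = ν.rnDeriv (μ.map X) (X ω) := hω
  rw [hω']

lemma markov_set {Ω W' X' Z' : Type*} [MeasurableSpace Ω] [StandardBorelSpace Ω]
    [MeasurableSpace W'] [StandardBorelSpace W'] [Nonempty W']
    [MeasurableSpace X'] [MeasurableSpace Z']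
    (μ : Measure Ω) [IsProbabilityMeasure μ]
    (W : Ω → W') (X : Ω → X') (Z : Ω → Z')
    (hW : Measurable W) (hX : Measurable X) (hZ : Measurable Z)
    (hMarkov : CondIndepFun (MeasurableSpace.comap Z inferInstance) hZ.comap_le W X μ)
    {B : Set W'} (hB : MeasurableSet B) {A : Set X'} (hA : MeasurableSet A) :
    ∫⁻ ω in X ⁻¹' A, condDistrib W Z μ (Z ω) B ∂μ = μ (W ⁻¹' B ∩ X ⁻¹' A) := by
  have hm := hZ.comap_le
  have h1 := (condIndepFun_iff_condExp_inter_preimage_eq_mul (hm' := hm) hW hX).1 hMarkov B A hB hA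
  have h2 := condDistrib_ae_eq_condExp (μ := μ) hZ hW hB
  set g : Ω → ℝ := fun ω => (condDistrib W Z μ (Z ω)).real B with hg
  have hgm : StronglyMeasurable[MeasurableSpace.comap Z inferInstance] g := by
    have : Measurable (fun z => (condDistrib W Z μ z).real B) :=
      ((condDistrib W Z μ).measurable_coe hB).ennreal_toReal
    exact (this.comp (comap_measurable Z)).stronglyMeasurable
  have hg1 : ∀ ω, ‖g ω‖ ≤ 1 := by
    intro ω
    simp only [hg]
    rw [Real.norm_of_nonneg measureReal_nonneg]
    exact measureReal_le_one
  have hAi : Integrable ((X ⁻¹' A).indicator (fun _ => (1:ℝ))) μ :=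
    (integrable_const 1).indicator (hX hA)
  have hgA : Integrable (g * (X ⁻¹' A).indicator (fun _ => (1:ℝ))) μ :=
    hAi.bdd_mul (c := 1) (hgm.mono hm).aestronglyMeasurable (ae_of_all _ hg1)
  have h3 := condExp_mul_of_stronglyMeasurable_left hgm hgA hAi
  have hreal : ∫ ω in X ⁻¹' A, g ω ∂μ = μ.real (W ⁻¹' B ∩ X ⁻¹' A) := by
    calc ∫ ω in X ⁻¹' A, g ω ∂μ = ∫ ω, (g * (X ⁻¹' A).indicator (fun _ => (1:ℝ))) ω ∂μ := by
          rw [← integral_indicator (hX hA)]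
          congr 1; ext ω
          by_cases h : ω ∈ X ⁻¹' A <;> simp [h]
      _ = ∫ ω, (μ[g * (X ⁻¹' A).indicator (fun _ => (1:ℝ)) |
            MeasurableSpace.comap Z inferInstance]) ω ∂μ := (integral_condExp hm).symm
      _ = ∫ ω, (μ⟦W ⁻¹' B ∩ X ⁻¹' A | MeasurableSpace.comap Z inferInstance⟧) ω ∂μ := by
          refine integral_congr_ae ?_
          filter_upwards [h1, h2, h3] with ω e1 e2 e3
          rw [e1, e3, ← e2]
          rfl
      _ = μ.real (W ⁻¹' B ∩ X ⁻¹' A) := by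
          rw [integral_condExp hm, integral_indicator ((hW hB).inter (hX hA))]
          simp
  have hgi : Integrable g (μ.restrict (X ⁻¹' A)) :=
    Integrable.of_bound (hgm.mono hm).aestronglyMeasurable 1 (ae_of_all _ hg1)
  calc ∫⁻ ω in X ⁻¹' A, condDistrib W Z μ (Z ω) B ∂μ
      = ∫⁻ ω in X ⁻¹' A, ENNReal.ofReal (g ω) ∂μ := by
        refine lintegral_congr fun ω => ?_
        simp [hg]
    _ = ENNReal.ofReal (∫ ω in X ⁻¹' A, g ω ∂μ) :=
        (ofReal_integral_eq_lintegral_ofReal hgi (ae_of_all _ fun ω => measureReal_nonneg)).symm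
    _ = _ := by rw [hreal]; simp

lemma markov_lintegral {Ω W' X' Z' : Type*} [MeasurableSpace Ω] [StandardBorelSpace Ω]
    [MeasurableSpace W'] [StandardBorelSpace W'] [Nonempty W']
    [MeasurableSpace X'] [MeasurableSpace Z']
    (μ : Measure Ω) [IsProbabilityMeasure μ]
    (W : Ω → W') (X : Ω → X') (Z : Ω → Z')
    (hW : Measurable W) (hX : Measurable X) (hZ : Measurable Z)
    (hMarkov : CondIndepFun (MeasurableSpace.comap Z inferInstance) hZ.comap_le W X μ)
    {B : Set W'} (hB : MeasurableSet B) {f : X' → ℝ≥0∞} (hf : Measurable f) :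
    ∫⁻ ω, f (X ω) * condDistrib W Z μ (Z ω) B ∂μ = ∫⁻ ω in W ⁻¹' B, f (X ω) ∂μ := by
  have hgm : Measurable (fun ω => condDistrib W Z μ (Z ω) B) :=
    ((condDistrib W Z μ).measurable_coe hB).comp hZ
  have key : (μ.withDensity (fun ω => condDistrib W Z μ (Z ω) B)).map X
      = (μ.restrict (W ⁻¹' B)).map X := by
    ext A hA
    rw [Measure.map_apply hX hA, Measure.map_apply hX hA, withDensity_apply _ (hX hA),
      Measure.restrict_apply (hX hA), markov_set μ W X Z hW hX hZ hMarkov hB hA, Set.inter_comm]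
  rw [← lintegral_map hf hX, ← key, lintegral_map hf hX,
    lintegral_withDensity_eq_lintegral_mul _ hgm (g := fun ω => f (X ω)) (hf.comp hX)]
  simp [mul_comm]

lemma condDistrib_lintegral {Ω W' X' : Type*} [MeasurableSpace Ω]
    [MeasurableSpace W'] [StandardBorelSpace W'] [Nonempty W'] [MeasurableSpace X']
    (μ : Measure Ω) [IsProbabilityMeasure μ] (W : Ω → W') (X : Ω → X')
    (hW : Measurable W) (hX : Measurable X)
    {B : Set W'} (hB : MeasurableSet B) {f : X' → ℝ≥0∞} (hf : Measurable f) :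
    ∫⁻ ω, f (X ω) * condDistrib W X μ (X ω) B ∂μ = ∫⁻ ω in W ⁻¹' B, f (X ω) ∂μ := by
  have hgm : Measurable (fun ω => condDistrib W X μ (X ω) B) :=
    ((condDistrib W X μ).measurable_coe hB).comp hX
  have key : (μ.withDensity (fun ω => condDistrib W X μ (X ω) B)).map X
      = (μ.restrict (W ⁻¹' B)).map X := by
    ext A hA
    rw [Measure.map_apply hX hA, Measure.map_apply hX hA, withDensity_apply _ (hX hA),
      Measure.restrict_apply (hX hA), setLIntegral_preimage_condDistrib hX hW.aemeasurable hB hA]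
  rw [← lintegral_map hf hX, ← key, lintegral_map hf hX,
    lintegral_withDensity_eq_lintegral_mul _ hgm (g := fun ω => f (X ω)) (hf.comp hX)]
  simp [mul_comm]

/-- Lemma 4. If `W − Z − Xⁿ` form a Markov chain (i.e. `W` and `Xⁿ` are
conditionally independent given `Z`; in particular `Z` may be a sufficient statistic of `Xⁿ`
for `W`), then `η(P_{Xⁿ}, P_{W|Xⁿ}) ≤ η(P_Z, P_{W|Z})`. -/
theorem sdpi_const_le_of_markov_chain
    {Ω W' X' Z' : Type*} [MeasurableSpace Ω] [StandardBorelSpace Ω]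
    [MeasurableSpace W'] [StandardBorelSpace W'] [Nonempty W']
    [MeasurableSpace X'] [MeasurableSpace Z']
    (μ : Measure Ω) [IsProbabilityMeasure μ]
    (n : ℕ) (W : Ω → W') (Xn : Ω → Fin n → X') (Z : Ω → Z')
    (hW : Measurable W) (hXn : Measurable Xn) (hZ : Measurable Z)
    (hMarkov : CondIndepFun (MeasurableSpace.comap Z inferInstance) hZ.comap_le W Xn μ) :
    eta (μ.map Xn) (condDistrib W Xn μ) ≤ eta (μ.map Z) (condDistrib W Z μ) := by
  have hPX : IsProbabilityMeasure (μ.map Xn) := Measure.isProbabilityMeasure_map hXn.aemeasurable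
  have hPZ : IsProbabilityMeasure (μ.map Z) := Measure.isProbabilityMeasure_map hZ.aemeasurable
  have hPW : IsProbabilityMeasure (μ.map W) := Measure.isProbabilityMeasure_map hW.aemeasurable
  have hbX : (μ.map Xn).bind (condDistrib W Xn μ) = μ.map W :=
    condDistrib_comp_map hXn.aemeasurable hW.aemeasurable
  have hbZ : (μ.map Z).bind (condDistrib W Z μ) = μ.map W :=
    condDistrib_comp_map hZ.aemeasurable hW.aemeasurable
  unfold eta
  refine iSup_le fun ν => iSup_le fun hν => iSup_le fun hne => ?_
  by_cases hac : ν ≪ μ.map Xn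
  swap
  · have : klDiv2 ν (μ.map Xn) = ⊤ := if_neg fun h => hac h.1
    simp [this]
  set f : (Fin n → X') → ℝ≥0∞ := ν.rnDeriv (μ.map Xn) with hf
  have hfm : Measurable f := Measure.measurable_rnDeriv _ _
  have hfX : Measurable (fun ω => f (Xn ω)) := hfm.comp hXn
  set ρ : Measure Ω := μ.withDensity (fun ω => f (Xn ω)) with hρ
  have hwd : (μ.map Xn).withDensity f = ν := Measure.withDensity_rnDeriv_eq _ _ hac
  have hρp : IsProbabilityMeasure ρ := by
    constructor
    rw [hρ, withDensity_apply _ MeasurableSet.univ, Measure.restrict_univ,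
      ← lintegral_map hfm hXn, ← setLIntegral_univ, ← withDensity_apply _ MeasurableSet.univ, hwd]
    exact measure_univ
  have hρZ : IsProbabilityMeasure (ρ.map Z) := Measure.isProbabilityMeasure_map hZ.aemeasurable
  have hnX : ν.bind (condDistrib W Xn μ) = ρ.map W := by
    ext B hB
    rw [Measure.bind_apply hB (Kernel.aemeasurable _), Measure.map_apply hW hB, hρ,
      withDensity_apply _ (hW hB), ← condDistrib_lintegral μ W Xn hW hXn hB hfm]
    have hk := (condDistrib W Xn μ).measurable_coe hB
    conv_lhs => rw [← hwd]
    rw [lintegral_withDensity_eq_lintegral_mul _ hfm hk, lintegral_map (hfm.mul hk) hXn]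
    rfl
  have hnZ : (ρ.map Z).bind (condDistrib W Z μ) = ρ.map W := by
    ext B hB
    have hk := (condDistrib W Z μ).measurable_coe hB
    rw [Measure.bind_apply hB (Kernel.aemeasurable _), Measure.map_apply hW hB, hρ,
      withDensity_apply _ (hW hB), ← markov_lintegral μ W Xn Z hW hXn hZ hMarkov hB hfm,
      lintegral_map hk hZ, lintegral_withDensity_eq_lintegral_mul _ hfX (g := fun ω => condDistrib W Z μ (Z ω) B) (hk.comp hZ)]
    rfl
  have hdpi : klDiv2 (ρ.map Z) (μ.map Z) ≤ klDiv2 ν (μ.map Xn) := by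
    rw [klDiv2_eq_klDiv, klDiv2_eq_klDiv, ← klDiv_withDensity_comp μ hXn ν hac]
    gcongr
    exact InformationTheory.klDiv_map_le _ _ hZ
  rw [hbX, hbZ, hnX]
  by_cases hZe : ρ.map Z = μ.map Z
  · have : ρ.map W = μ.map W := by rw [← hnZ, hZe, hbZ]
    rw [this, klDiv2_eq_klDiv]
    simp
  · calc klDiv2 (ρ.map W) (μ.map W) / klDiv2 ν (μ.map Xn)
        ≤ klDiv2 (ρ.map W) (μ.map W) / klDiv2 (ρ.map Z) (μ.map Z) :=
          ENNReal.div_le_div_left hdpi _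
      _ = klDiv2 ((ρ.map Z).bind (condDistrib W Z μ)) (μ.map W) / klDiv2 (ρ.map Z) (μ.map Z) := by
          rw [hnZ]
      _ ≤ _ := le_iSup_of_le (ρ.map Z) (le_iSup_of_le hρZ (le_iSup_of_le (f := fun _ => _) hZe le_rfl))


end DecEst
end
end

section
/- Suppose W is uniformly distributed on {−1,1}^d, and given W the sample X ∈ {−1,1}^d has independent coordinates with P_{X_j|W_j=w_j}(x_j) = (1 + x_j w_j δ)/2 for some δ ∈ [0,1] (i.e., each coordinate passes through BSC((1−δ)/2)). The processor quantizes X to a b-bit message and sends it over T uses of an arbitrary discrete memoryless channel P_{V|U} with capacity C. Then for any quantizer and encoder, I(W; V^T) ≤ min{ d (1 − h₂((1−δ)/2)) η_T, δ² b η_T, δ² C T }, where η_T is the channel-contraction coefficient (η_T = 1 − (1 − η(P_{V|U}))^T with feedback; η_T = η(P_{V|U}^{⊗T}) without feedback). -/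
open MeasureTheory ProbabilityTheory Real

attribute [local instance] Classical.propDecidable
open scoped ENNReal NNReal

noncomputable section
namespace DecEst

variable {Ω α β γ : Type*}


/-- Mutual information (in bits) of a joint distribution. -/
def miM [MeasurableSpace α] [MeasurableSpace β] (pp : Measure (α × β)) : ℝ≥0∞ :=
  klDiv2 pp ((pp.map Prod.fst).prod (pp.map Prod.snd))

/-- Mutual information (in bits) between two random variables. -/
def mi [MeasurableSpace Ω] [MeasurableSpace α] [MeasurableSpace β]
    (μ : Measure Ω) (X : Ω → α) (Y : Ω → β) : ℝ :=
  (miM (μ.map fun ω => (X ω, Y ω))).toReal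

/-- SDPI constant of a channel `K` (supremum over input distributions). -/
def etaMax [MeasurableSpace α] [MeasurableSpace β] (K : Kernel α β) : ℝ≥0∞ :=
  ⨆ (pp : Measure α) (_ : IsProbabilityMeasure pp), eta pp K

/-- Shannon capacity (in bits) of a channel. -/
def capacity [MeasurableSpace α] [MeasurableSpace β] (K : Kernel α β) [IsSFiniteKernel K] : ℝ :=
  ⨆ pp : ProbabilityMeasure α, (miM ((pp : Measure α) ⊗ₘ K)).toReal

/-- `T`-fold memoryless product of a channel. -/
def kernelPi [MeasurableSpace α] [MeasurableSpace β] [Countable α] [MeasurableSingletonClass α]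
    (T : ℕ) (K : Kernel α β) : Kernel (Fin T → α) (Fin T → β) where
  toFun u := Measure.pi fun t => K (u t)
  measurable' := measurable_of_countable _

/-- Binary symmetric channel with crossover probability `ε`. -/
def bsc (ε : ℝ) : Kernel Bool Bool where
  toFun b := (ENNReal.ofReal ε) • Measure.dirac (!b) + (ENNReal.ofReal (1 - ε)) • Measure.dirac b
  measurable' := measurable_of_countable _

/-- Binary entropy function (in bits). -/
def binEnt (p : ℝ) : ℝ := (Real.negMulLog p + Real.negMulLog (1 - p)) / Real.log 2


section RealPart

/-- finite KL in nats -/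
def kl {A : Type*} [Fintype A] (p q : A → ℝ) : ℝ := ∑ a, p a * Real.log (p a / q a)

/-- push forward through a finite channel -/
def push {A B : Type*} [Fintype A] (p : A → ℝ) (k : A → B → ℝ) (b : B) : ℝ := ∑ a, p a * k a b

/-- finite mutual information in nats -/
def MI {A B : Type*} [Fintype A] [Fintype B] (p : A → ℝ) (k : A → B → ℝ) : ℝ :=
  ∑ a, p a * kl (k a) (push p k)

/-- row stochastic -/
def Sto {A B : Type*} [Fintype B] (k : A → B → ℝ) : Prop :=
  (∀ a b, 0 ≤ k a b) ∧ ∀ a, ∑ b, k a b = 1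

lemma logsum {ι : Type*} (s : Finset ι) (p q : ι → ℝ) (hp : ∀ i, 0 ≤ p i) (hq : ∀ i, 0 ≤ q i)
    (hac : ∀ i, q i = 0 → p i = 0) :
    (∑ i ∈ s, p i) * Real.log ((∑ i ∈ s, p i) / ∑ i ∈ s, q i) ≤
      ∑ i ∈ s, p i * Real.log (p i / q i) := by
  set P := ∑ i ∈ s, p i with hP
  set Q := ∑ i ∈ s, q i with hQ
  have hP0 : 0 ≤ P := Finset.sum_nonneg fun i _ => hp i
  have hQ0 : 0 ≤ Q := Finset.sum_nonneg fun i _ => hq i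
  rcases hP0.eq_or_lt with h | hPpos
  · have : ∀ i ∈ s, p i = 0 := (Finset.sum_eq_zero_iff_of_nonneg fun i _ => hp i).1 h.symm
    rw [← h, zero_mul, Finset.sum_eq_zero]
    intro i hi; rw [this i hi, zero_mul]
  have hQpos : 0 < Q := by
    rcases hQ0.eq_or_lt with h | h
    · have : ∀ i ∈ s, q i = 0 := (Finset.sum_eq_zero_iff_of_nonneg fun i _ => hq i).1 h.symm
      have : P = 0 := Finset.sum_eq_zero fun i hi => hac i (this i hi)
      linarith
    · exact h
  have key : ∀ i ∈ s, p i * Real.log (P / Q) + p i - P / Q * q i ≤ p i * Real.log (p i / q i) := by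
    intro i _
    rcases (hp i).eq_or_lt with h | h
    · rw [← h]
      have : 0 ≤ P / Q * q i := by have := hq i; positivity
      simp; linarith
    · have hqi : 0 < q i := by
        rcases (hq i).eq_or_lt with h' | h'
        · have := hac i h'.symm; linarith
        · exact h'
      have h1 := Real.log_le_sub_one_of_pos (x := (P / Q) * q i / p i) (by positivity)
      rw [Real.log_div (by positivity) (by positivity), Real.log_mul (by positivity) (by positivity)] at h1
      rw [Real.log_div h.ne' hqi.ne']
      have h2 : p i * (P / Q * q i / p i) = P / Q * q i := by field_simp
      nlinarith [mul_le_mul_of_nonneg_left h1 h.le]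
  have := Finset.sum_le_sum key
  rw [Finset.sum_sub_distrib, Finset.sum_add_distrib, ← Finset.sum_mul, ← Finset.mul_sum, ← hP, ← hQ] at this
  have h3 : P / Q * Q = P := by field_simp
  linarith

lemma kl_ge {A : Type*} [Fintype A] (p q : A → ℝ) (hp : ∀ i, 0 ≤ p i) (hq : ∀ i, 0 ≤ q i)
    (hac : ∀ i, q i = 0 → p i = 0) :
    (∑ i, p i) * Real.log ((∑ i, p i) / ∑ i, q i) ≤ kl p q := logsum _ p q hp hq hac

lemma kl_nonneg {A : Type*} [Fintype A] (p q : A → ℝ) (hp : ∀ i, 0 ≤ p i) (hq : ∀ i, 0 ≤ q i)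
    (hac : ∀ i, q i = 0 → p i = 0) (h1 : ∑ i, p i = 1) (h2 : ∑ i, q i = 1) : 0 ≤ kl p q := by
  have := kl_ge p q hp hq hac
  simpa [h1, h2] using this

lemma push_nonneg {A B : Type*} [Fintype A] [Fintype B] {p : A → ℝ} {k : A → B → ℝ}
    (hp : ∀ i, 0 ≤ p i) (hk : Sto k) (b : B) : 0 ≤ push p k b :=
  Finset.sum_nonneg fun a _ => mul_nonneg (hp a) (hk.1 a b)

lemma push_sum {A B : Type*} [Fintype A] [Fintype B] (p : A → ℝ) {k : A → B → ℝ}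
    (hk : Sto k) : ∑ b, push p k b = ∑ a, p a := by
  unfold push
  rw [Finset.sum_comm]
  simp [← Finset.mul_sum, hk.2]

lemma push_ac {A B : Type*} [Fintype A] [Fintype B] {p q : A → ℝ} {k : A → B → ℝ}
    (hq : ∀ i, 0 ≤ q i) (hk : Sto k) (hac : ∀ i, q i = 0 → p i = 0) (b : B)
    (h : push q k b = 0) : push p k b = 0 := by
  have := (Finset.sum_eq_zero_iff_of_nonneg (fun a _ => mul_nonneg (hq a) (hk.1 a b))).1 h
  refine Finset.sum_eq_zero fun a ha => ?_
  rcases mul_eq_zero.1 (this a ha) with h | h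
  · rw [hac a h, zero_mul]
  · rw [h, mul_zero]

lemma kl_push_le {A B : Type*} [Fintype A] [Fintype B] (p q : A → ℝ) (k : A → B → ℝ)
    (hp : ∀ i, 0 ≤ p i) (hq : ∀ i, 0 ≤ q i) (hk : Sto k)
    (hac : ∀ i, q i = 0 → p i = 0) : kl (push p k) (push q k) ≤ kl p q := by
  have h1 : ∀ b, push p k b * Real.log (push p k b / push q k b) ≤
      ∑ a, p a * k a b * Real.log (p a / q a) := by
    intro b
    refine (logsum Finset.univ (fun a => p a * k a b) (fun a => q a * k a b)
      (fun a => mul_nonneg (hp a) (hk.1 a b)) (fun a => mul_nonneg (hq a) (hk.1 a b)) ?_).trans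
      (le_of_eq ?_)
    · intro a h
      rcases mul_eq_zero.1 h with h | h
      · simp [hac a h]
      · simp [h]
    · refine Finset.sum_congr rfl fun a _ => ?_
      by_cases h : k a b = 0
      · simp [h]
      · rw [mul_div_mul_right _ _ h]
  refine (Finset.sum_le_sum fun b _ => h1 b).trans (le_of_eq ?_)
  rw [Finset.sum_comm]
  refine Finset.sum_congr rfl fun a _ => ?_
  rw [← Finset.sum_mul, ← Finset.mul_sum, hk.2, mul_one]

/-- strong data processing at level `η` -/
def SDPI {A B : Type*} [Fintype A] [Fintype B] (k : A → B → ℝ) (η : ℝ) : Prop :=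
  ∀ p q : A → ℝ, (∀ i, 0 ≤ p i) → (∀ i, 0 ≤ q i) → (∀ i, q i = 0 → p i = 0) →
    ∑ i, p i = 1 → ∑ i, q i = 1 → kl (push p k) (push q k) ≤ η * kl p q

lemma kl_scale {A : Type*} [Fintype A] (p q : A → ℝ) (hac : ∀ i, q i = 0 → p i = 0)
    (c e : ℝ) (hc : 0 < c) (he : 0 < e) :
    kl (fun a => c * p a) (fun a => e * q a) = c * (kl p q + (∑ a, p a) * Real.log (c / e)) := by
  unfold kl
  rw [Finset.sum_mul, ← Finset.sum_add_distrib, Finset.mul_sum]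
  refine Finset.sum_congr rfl fun a _ => ?_
  by_cases h : p a = 0
  · simp [h]
  have hq : q a ≠ 0 := fun h' => h (hac a h')
  rw [mul_div_mul_comm, Real.log_mul (by positivity) (by positivity)]
  ring

lemma push_smul {A B : Type*} [Fintype A] [Fintype B] (c : ℝ) (p : A → ℝ) (k : A → B → ℝ) :
    push (fun a => c * p a) k = fun b => c * push p k b := by
  funext b; unfold push; rw [Finset.mul_sum]; simp [mul_assoc]

lemma sdpi_unnorm {A B : Type*} [Fintype A] [Fintype B] {k : A → B → ℝ} (hk : Sto k) {η : ℝ}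
    (h : SDPI k η) (p q : A → ℝ) (hp : ∀ i, 0 ≤ p i) (hq : ∀ i, 0 ≤ q i)
    (hac : ∀ i, q i = 0 → p i = 0) :
    kl (push p k) (push q k) ≤
      η * kl p q + (1 - η) * ((∑ a, p a) * Real.log ((∑ a, p a) / ∑ a, q a)) := by
  set P := ∑ i, p i with hP
  set Q := ∑ i, q i with hQ
  have hP0 : 0 ≤ P := Finset.sum_nonneg fun i _ => hp i
  have hQ0 : 0 ≤ Q := Finset.sum_nonneg fun i _ => hq i
  rcases hP0.eq_or_lt with h0 | hPpos
  · have : ∀ i ∈ Finset.univ, p i = 0 :=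
      (Finset.sum_eq_zero_iff_of_nonneg fun i _ => hp i).1 h0.symm
    have hp0 : p = fun _ => 0 := by funext i; exact this i (Finset.mem_univ _)
    rw [← h0, hp0]; simp [kl, push]
  have hQpos : 0 < Q := by
    rcases hQ0.eq_or_lt with h | h
    · have : ∀ i ∈ Finset.univ, q i = 0 :=
        (Finset.sum_eq_zero_iff_of_nonneg fun i _ => hq i).1 h.symm
      have : P = 0 := Finset.sum_eq_zero fun i hi => hac i (this i hi)
      linarith
    · exact h
  have h1 := h (fun a => P⁻¹ * p a) (fun a => Q⁻¹ * q a) (fun i => mul_nonneg (by positivity) (hp i))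
    (fun i => mul_nonneg (by positivity) (hq i)) (by
      intro i hi
      rcases mul_eq_zero.1 hi with h | h
      · exact absurd h (by positivity)
      · simp [hac i h]) (by rw [← Finset.mul_sum, ← hP]; field_simp)
      (by rw [← Finset.mul_sum, ← hQ]; field_simp)
  rw [push_smul, push_smul, kl_scale _ _ (push_ac hq hk hac) _ _ (by positivity) (by positivity),
    kl_scale _ _ hac _ _ (by positivity) (by positivity), push_sum p hk, ← hP] at h1
  have h2 : Real.log (P⁻¹ / Q⁻¹) = - Real.log (P / Q) := by
    rw [← Real.log_inv]; congr 1; field_simp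
  rw [h2] at h1
  have h3 := mul_le_mul_of_nonneg_left h1 hP0
  rw [← mul_assoc, mul_inv_cancel₀ hPpos.ne', one_mul] at h3
  have h4 : P * (η * (P⁻¹ * (kl p q + P * -Real.log (P / Q)))) = η * (kl p q + P * -Real.log (P / Q)) := by
    field_simp
  rw [h4] at h3
  linarith

/-- feedback channel -/
def FB {Y U V : Type*} (k : U → V → ℝ) (φ : (t : ℕ) → Y → (Fin t → V) → U) :
    (t : ℕ) → Y → (Fin t → V) → ℝ
  | 0, _, _ => 1
  | t + 1, y, v => FB k φ t y (fun i => v i.castSucc) *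
      k (φ t y (fun i => v i.castSucc)) (v (Fin.last t))

lemma sum_snoc {V : Type*} [Fintype V] (t : ℕ) (f : (Fin (t+1) → V) → ℝ) :
    ∑ v, f v = ∑ v : Fin t → V, ∑ b, f (Fin.snoc v b) := by
  rw [← (Fin.snocEquiv (fun _ : Fin (t+1) => V)).sum_comp, Fintype.sum_prod_type, Finset.sum_comm]
  rfl

lemma FB_snoc {Y U V : Type*} (k : U → V → ℝ) (φ : (t : ℕ) → Y → (Fin t → V) → U) (t : ℕ) (y : Y)
    (v : Fin t → V) (b : V) :
    FB k φ (t+1) y (Fin.snoc v b : Fin (t+1) → V) = FB k φ t y v * k (φ t y v) b := by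
  simp [FB]

lemma FB_sto {Y U V : Type*} [Fintype V] (k : U → V → ℝ) (hk : Sto k)
    (φ : (t : ℕ) → Y → (Fin t → V) → U) (t : ℕ) : Sto (FB k φ t) := by
  induction t with
  | zero => exact ⟨fun _ _ => zero_le_one, fun _ => by simp [FB]⟩
  | succ t ih =>
    refine ⟨fun y v => mul_nonneg (ih.1 _ _) (hk.1 _ _), fun y => ?_⟩
    rw [sum_snoc]
    simp [FB_snoc, ← Finset.mul_sum, hk.2, ih.2]

lemma FB_sdpi {Y U V : Type*} [Fintype Y] [Fintype U] [Fintype V] (k : U → V → ℝ) (hk : Sto k)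
    (φ : (t : ℕ) → Y → (Fin t → V) → U) {η : ℝ} (h0 : 0 ≤ η) (h1 : η ≤ 1) (h : SDPI k η) (t : ℕ) :
    SDPI (FB k φ t) (1 - (1 - η) ^ t) := by
  intro p q hp hq hac hp1 hq1
  induction t with
  | zero => simp [kl, push, FB, hp1, hq1]
  | succ t ih =>
    have hF := FB_sto k hk φ t
    -- per-v inequality
    have key : ∀ v : Fin t → V, ∑ b, push p (FB k φ (t+1)) (Fin.snoc v b : Fin (t+1) → V) *
        Real.log (push p (FB k φ (t+1)) (Fin.snoc v b : Fin (t+1) → V) /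
          push q (FB k φ (t+1)) (Fin.snoc v b : Fin (t+1) → V)) ≤
        η * (∑ y, p y * FB k φ t y v * Real.log (p y / q y)) +
        (1 - η) * (push p (FB k φ t) v * Real.log (push p (FB k φ t) v / push q (FB k φ t) v)) := by
      intro v
      -- push to U
      let e : Y → U → ℝ := fun y u => if φ t y v = u then 1 else 0
      have he : Sto e := ⟨fun y u => by simp only [e]; split_ifs <;> norm_num, fun y => by simp [e]⟩
      let a : Y → ℝ := fun y => p y * FB k φ t y v
      let c : Y → ℝ := fun y => q y * FB k φ t y v
      have ha : ∀ y, 0 ≤ a y := fun y => mul_nonneg (hp y) (hF.1 _ _)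
      have hc : ∀ y, 0 ≤ c y := fun y => mul_nonneg (hq y) (hF.1 _ _)
      have hacc : ∀ y, c y = 0 → a y = 0 := by
        intro y hy
        rcases mul_eq_zero.1 hy with h | h
        · simp [a, hac y h]
        · simp [a, h]
      have hpush : ∀ (r : Y → ℝ) (b : V), push r (FB k φ (t+1)) (Fin.snoc v b : Fin (t+1) → V) =
          push (push (fun y => r y * FB k φ t y v) e) k b := by
        intro r b
        unfold push
        simp_rw [Finset.sum_mul]
        rw [Finset.sum_comm]
        refine Finset.sum_congr rfl fun y _ => ?_
        rw [FB_snoc]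
        simp [e, mul_assoc]
      have hs := sdpi_unnorm hk h (push a e) (push c e) (push_nonneg ha he) (push_nonneg hc he)
        (push_ac hc he hacc)
      rw [push_sum a he, push_sum c he] at hs
      have hd := kl_push_le a c e ha hc he hacc
      have hkl : kl a c = ∑ y, p y * FB k φ t y v * Real.log (p y / q y) := by
        refine Finset.sum_congr rfl fun y _ => ?_
        by_cases h : FB k φ t y v = 0
        · simp [a, h]
        · simp only [a, c]; rw [mul_div_mul_right _ _ h]
      simp_rw [hpush]
      refine le_trans hs ?_
      rw [← hkl]
      exact add_le_add_left (mul_le_mul_of_nonneg_left hd h0) _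
    have hsum := Finset.sum_le_sum fun v (_ : v ∈ Finset.univ) => key v
    rw [← sum_snoc t (fun v => push p (FB k φ (t+1)) v *
        Real.log (push p (FB k φ (t+1)) v / push q (FB k φ (t+1)) v)), Finset.sum_add_distrib,
        ← Finset.mul_sum, ← Finset.mul_sum, Finset.sum_comm] at hsum
    have h5 : ∑ y, ∑ v, p y * FB k φ t y v * Real.log (p y / q y) = kl p q := by
      refine Finset.sum_congr rfl fun y _ => ?_
      rw [← Finset.sum_mul, ← Finset.mul_sum, hF.2, mul_one]
    rw [h5] at hsum
    have h6 : kl (push p (FB k φ (t+1))) (push q (FB k φ (t+1))) ≤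
      η * kl p q + (1 - η) * kl (push p (FB k φ t)) (push q (FB k φ t)) := hsum
    refine h6.trans ?_
    have := mul_le_mul_of_nonneg_left ih (sub_nonneg.2 h1)
    rw [pow_succ]
    nlinarith

lemma MI_scale_cap {X U V : Type*} [Fintype X] [Fintype U] [Fintype V] (k : U → V → ℝ) (hk : Sto k)
    {C : ℝ} (hC : ∀ pr : U → ℝ, (∀ u, 0 ≤ pr u) → ∑ u, pr u = 1 → MI pr k ≤ C)
    (a : X → ℝ) (ha : ∀ x, 0 ≤ a x) (g : X → U) :
    ∑ x, a x * ∑ b, k (g x) b * Real.log (k (g x) b * (∑ x, a x) / ∑ x, a x * k (g x) b) ≤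
      (∑ x, a x) * C := by
  set A := ∑ x, a x with hA
  have hA0 : 0 ≤ A := Finset.sum_nonneg fun i _ => ha i
  rcases hA0.eq_or_lt with h0 | hpos
  · have : ∀ i ∈ Finset.univ, a i = 0 :=
      (Finset.sum_eq_zero_iff_of_nonneg fun i _ => ha i).1 h0.symm
    rw [← h0, zero_mul, Finset.sum_eq_zero]
    intro i hi; rw [this i hi, zero_mul]
  let pr : U → ℝ := fun u => A⁻¹ * ∑ x, if g x = u then a x else 0
  have hsumg : ∀ f : U → ℝ, ∑ u, pr u * f u = A⁻¹ * ∑ x, a x * f (g x) := by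
    intro f
    simp only [pr, mul_assoc, ← Finset.mul_sum, Finset.sum_mul]
    rw [Finset.sum_comm]
    simp
  have h1 := hC pr (fun u => mul_nonneg (by positivity) (Finset.sum_nonneg fun x _ => by
    split_ifs; exacts [ha x, le_rfl])) (by
      have := hsumg (fun _ => 1)
      simp only [mul_one] at this
      rw [this, ← hA]; field_simp)
  unfold MI at h1
  rw [hsumg] at h1
  have hpush : ∀ b, push pr k b = A⁻¹ * ∑ x, a x * k (g x) b := fun b => hsumg (fun u => k u b)
  rw [inv_mul_le_iff₀ hpos] at h1
  refine le_trans (le_of_eq ?_) h1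
  refine Finset.sum_congr rfl fun x _ => ?_
  congr 1
  refine Finset.sum_congr rfl fun b _ => ?_
  rw [hpush]
  congr 2
  rw [← div_div, div_inv_eq_mul]

lemma FB_cap {X U V : Type*} [Fintype X] [Fintype U] [Fintype V] (k : U → V → ℝ) (hk : Sto k)
    (φ : (t : ℕ) → X → (Fin t → V) → U)
    {C : ℝ} (hC : ∀ pr : U → ℝ, (∀ u, 0 ≤ pr u) → ∑ u, pr u = 1 → MI pr k ≤ C)
    (p : X → ℝ) (hp : ∀ x, 0 ≤ p x) (hp1 : ∑ x, p x = 1) (t : ℕ) :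
    MI p (FB k φ t) ≤ t * C := by
  induction t with
  | zero => simp [MI, kl, push, FB, hp1]
  | succ t ih =>
    have hF := FB_sto k hk φ t
    have hF' := FB_sto k hk φ (t+1)
    have key : ∀ v : Fin t → V, ∑ x, ∑ b, p x * (FB k φ (t+1) x (Fin.snoc v b : Fin (t+1) → V) *
        Real.log (FB k φ (t+1) x (Fin.snoc v b : Fin (t+1) → V) /
          push p (FB k φ (t+1)) (Fin.snoc v b : Fin (t+1) → V))) ≤
        ∑ x, p x * (FB k φ t x v * Real.log (FB k φ t x v / push p (FB k φ t) v)) +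
          push p (FB k φ t) v * C := by
      intro v
      have hs := MI_scale_cap k hk hC (fun x => p x * FB k φ t x v)
        (fun x => mul_nonneg (hp x) (hF.1 _ _)) (fun x => φ t x v)
      refine le_trans (le_of_eq ?_) (add_le_add_right hs _)
      rw [← Finset.sum_add_distrib]
      refine Finset.sum_congr rfl fun x _ => ?_
      have e1 : p x * (FB k φ t x v * Real.log (FB k φ t x v / push p (FB k φ t) v)) =
          ∑ b, p x * (FB k φ t x v * Real.log (FB k φ t x v / push p (FB k φ t) v)) * k (φ t x v) b := by
        rw [← Finset.mul_sum, hk.2, mul_one]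
      rw [e1, Finset.mul_sum, ← Finset.sum_add_distrib]
      refine Finset.sum_congr rfl fun b _ => ?_
      rw [FB_snoc]
      by_cases h1 : p x = 0
      · simp [h1]
      by_cases h2 : FB k φ t x v = 0
      · simp [h2]
      by_cases h3 : k (φ t x v) b = 0
      · simp [h3]
      have g1 : 0 < p x := lt_of_le_of_ne (hp x) (Ne.symm h1)
      have g2 : 0 < FB k φ t x v := lt_of_le_of_ne (hF.1 _ _) (Ne.symm h2)
      have g3 : 0 < k (φ t x v) b := lt_of_le_of_ne (hk.1 _ _) (Ne.symm h3)
      have eB : push p (FB k φ (t+1)) (Fin.snoc v b : Fin (t+1) → V) =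
          ∑ x, p x * FB k φ t x v * k (φ t x v) b := by
        unfold push; simp_rw [FB_snoc, mul_assoc]
      have g4 : 0 < push p (FB k φ t) v :=
        lt_of_lt_of_le (mul_pos g1 g2) (Finset.single_le_sum
          (f := fun x => p x * FB k φ t x v) (fun x _ => mul_nonneg (hp x) (hF.1 x v)) (Finset.mem_univ x))
      have g5 : 0 < ∑ x, p x * FB k φ t x v * k (φ t x v) b :=
        lt_of_lt_of_le (mul_pos (mul_pos g1 g2) g3) (Finset.single_le_sum
          (f := fun x => p x * FB k φ t x v * k (φ t x v) b)
          (fun x _ => mul_nonneg (mul_nonneg (hp x) (hF.1 x v)) (hk.1 _ _)) (Finset.mem_univ x))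
      rw [eB]
      change _ = _ + p x * FB k φ t x v * (k (φ t x v) b * Real.log (k (φ t x v) b *
        push p (FB k φ t) v / ∑ x, p x * FB k φ t x v * k (φ t x v) b))
      rw [Real.log_div (by positivity) g5.ne', Real.log_div (by positivity) g5.ne',
        Real.log_div (by positivity) g4.ne', Real.log_mul h2 h3, Real.log_mul h3 g4.ne']
      ring
    have hsum := Finset.sum_le_sum fun v (_ : v ∈ Finset.univ) => key v
    rw [Finset.sum_add_distrib, ← Finset.sum_mul, push_sum p hF, hp1, one_mul] at hsum
    have e1 : MI p (FB k φ (t+1)) = ∑ v : Fin t → V, ∑ x, ∑ b, p x * (FB k φ (t+1) x (Fin.snoc v b : Fin (t+1) → V) *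
        Real.log (FB k φ (t+1) x (Fin.snoc v b : Fin (t+1) → V) /
          push p (FB k φ (t+1)) (Fin.snoc v b : Fin (t+1) → V))) := by
      unfold MI kl
      rw [Finset.sum_comm]
      refine Finset.sum_congr rfl fun x _ => ?_
      rw [sum_snoc, Finset.mul_sum]
      simp_rw [Finset.mul_sum]
    have e2 : MI p (FB k φ t) = ∑ v : Fin t → V, ∑ x, p x * (FB k φ t x v * Real.log (FB k φ t x v / push p (FB k φ t) v)) := by
      unfold MI kl
      rw [Finset.sum_comm]
      refine Finset.sum_congr rfl fun x _ => ?_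
      rw [Finset.mul_sum]
    rw [e1]
    push_cast
    linarith

end RealPart
section BinPart

/-- helper -/
def rfun (m : ℝ) : ℝ := (1 + m) * Real.log (1 + m) + (1 - m) * Real.log (1 - m)

lemma rfun_cont : Continuous rfun := by
  unfold rfun
  exact (Real.continuous_mul_log.comp (by fun_prop : Continuous fun m : ℝ => 1 + m)).add
    (Real.continuous_mul_log.comp (by fun_prop : Continuous fun m : ℝ => 1 - m))

lemma rfun_deriv (m : ℝ) (h : |m| < 1) :
    HasDerivAt rfun (Real.log (1 + m) - Real.log (1 - m)) m := by
  rw [abs_lt] at h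
  have h1 : HasDerivAt (fun m : ℝ => 1 + m) 1 m := by simpa using (hasDerivAt_id m).const_add 1
  have h2 : HasDerivAt (fun m : ℝ => 1 - m) (-1) m := by simpa using (hasDerivAt_id m).const_sub 1
  have h3 := (h1.mul (h1.log (by linarith))).add (h2.mul (h2.log (by linarith)))
  refine h3.congr_deriv ?_
  have a1 : 1 + m ≠ 0 := by linarith
  have a2 : 1 - m ≠ 0 := by linarith
  field_simp
  ring

lemma artanh_le (δ m : ℝ) (hδ0 : 0 ≤ δ) (hδ1 : δ ≤ 1) (hm0 : 0 ≤ m) (hm1 : m < 1) :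
    Real.log (1 + δ * m) - Real.log (1 - δ * m) ≤ δ * (Real.log (1 + m) - Real.log (1 - m)) := by
  have hdm : δ * m ≤ m := by nlinarith
  have hdm0 : 0 ≤ δ * m := by positivity
  have h1 := Real.hasSum_log_sub_log_of_abs_lt_one (x := δ * m) (by rw [abs_of_nonneg hdm0]; linarith)
  have h2 := (Real.hasSum_log_sub_log_of_abs_lt_one (x := m) (by rwa [abs_of_nonneg hm0])).mul_left δ
  refine hasSum_le (fun k => ?_) h1 h2
  rw [mul_pow, pow_succ]
  have : δ ^ (2 * k) ≤ 1 := pow_le_one₀ hδ0 hδ1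
  have h3 : 0 ≤ 2 * (1 / (2 * (k:ℝ) + 1)) * m ^ (2 * k + 1) * δ := by positivity
  nlinarith

lemma rfun_le_nonneg (δ m : ℝ) (hδ0 : 0 ≤ δ) (hδ1 : δ ≤ 1) (hm0 : 0 ≤ m) (hm1 : m ≤ 1) :
    rfun (δ * m) ≤ δ ^ 2 * rfun m := by
  have hmono : MonotoneOn (fun m => δ ^ 2 * rfun m - rfun (δ * m)) (Set.Icc 0 1) := by
    refine monotoneOn_of_hasDerivWithinAt_nonneg (convex_Icc 0 1)
      (f' := fun m => δ ^ 2 * (Real.log (1 + m) - Real.log (1 - m)) -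
        (Real.log (1 + δ * m) - Real.log (1 - δ * m)) * δ) ?_ ?_ ?_
    · exact ((rfun_cont.const_mul _).sub (rfun_cont.comp (by fun_prop))).continuousOn
    · intro x hx
      rw [interior_Icc] at hx
      have hx1 : δ * x ≤ x := by nlinarith [hx.1]
      have hx0 : 0 ≤ δ * x := mul_nonneg hδ0 hx.1.le
      have d1 := (rfun_deriv x (by rw [abs_of_pos hx.1]; exact hx.2)).const_mul (δ ^ 2)
      have d2 : HasDerivAt (fun m : ℝ => δ * m) δ x := by simpa using (hasDerivAt_id x).const_mul δ
      have d3 := (rfun_deriv (δ * x) (by rw [abs_of_nonneg hx0]; linarith [hx.2])).comp x d2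
      exact (d1.sub d3).hasDerivWithinAt
    · intro x hx
      rw [interior_Icc] at hx
      have := artanh_le δ x hδ0 hδ1 hx.1.le hx.2
      nlinarith
  have := hmono (Set.left_mem_Icc.2 zero_le_one) ⟨hm0, hm1⟩ hm0
  simp [rfun] at this
  simpa [rfun] using this

lemma rfun_le (δ m : ℝ) (hδ0 : 0 ≤ δ) (hδ1 : δ ≤ 1) (hm0 : -1 ≤ m) (hm1 : m ≤ 1) :
    rfun (δ * m) ≤ δ ^ 2 * rfun m := by
  rcases le_total 0 m with h | h
  · exact rfun_le_nonneg δ m hδ0 hδ1 h hm1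
  · have := rfun_le_nonneg δ (-m) hδ0 hδ1 (by linarith) (by linarith)
    have e : ∀ y, rfun (-y) = rfun y := by intro y; unfold rfun; rw [sub_neg_eq_add]; rw [← sub_eq_add_neg]; ring
    rwa [mul_neg, e, e] at this

/-- bsc matrix -/
def bm (δ : ℝ) (w x : Bool) : ℝ := if x = w then 1 - (1 - δ) / 2 else (1 - δ) / 2

/-- product bsc matrix -/
def NN (δ : ℝ) {d : ℕ} (w x : Fin d → Bool) : ℝ := ∏ j, bm δ (w j) (x j)

/-- one bit functional -/
def phi1 (g : Bool → ℝ) : ℝ := ∑ b, g b * Real.log (g b / ((∑ b, g b) / 2))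

lemma phi1_eq (G m : ℝ) (hG : 0 < G) (g : Bool → ℝ) (ht : g true = G * (1 + m) / 2)
    (hf : g false = G * (1 - m) / 2) : phi1 g = G / 2 * rfun m := by
  unfold phi1 rfun
  simp only [Fintype.sum_bool, ht, hf]
  have e1 : G * (1 + m) / 2 / ((G * (1 + m) / 2 + G * (1 - m) / 2) / 2) = 1 + m := by
    field_simp; ring
  have e2 : G * (1 - m) / 2 / ((G * (1 + m) / 2 + G * (1 - m) / 2) / 2) = 1 - m := by
    field_simp; ring
  rw [e1, e2]; ring

lemma phi1_bm (δ : ℝ) (hδ0 : 0 ≤ δ) (hδ1 : δ ≤ 1) (g : Bool → ℝ) (hg : ∀ b, 0 ≤ g b) :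
    phi1 (fun w => ∑ x, bm δ w x * g x) ≤ δ ^ 2 * phi1 g := by
  have ht := hg true
  have hf := hg false
  rcases (add_nonneg ht hf).eq_or_lt with h | h
  · have h1 : g true = 0 := by linarith
    have h2 : g false = 0 := by linarith
    simp [phi1, h1, h2]
  set G := g true + g false with hG
  set m := (g true - g false) / G with hm
  have hmG : G * m = g true - g false := by rw [hm]; field_simp
  rw [phi1_eq G m h g (by linarith) (by linarith),
    phi1_eq G (δ * m) h _ (by simp [bm]; linear_combination (-δ/2) * hmG + (-1/2) * hG)
      (by simp [bm]; linear_combination (δ/2) * hmG + (-1/2) * hG)]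
  have := rfun_le δ m hδ0 hδ1 (by rw [hm, le_div_iff₀ h]; linarith) (by rw [hm, div_le_iff₀ h]; linarith)
  nlinarith

lemma phi1_conv {ι : Type*} [Fintype ι] (c : ι → ℝ) (hc : ∀ i, 0 ≤ c i) (g : ι → Bool → ℝ)
    (hg : ∀ i b, 0 ≤ g i b) :
    phi1 (fun b => ∑ i, c i * g i b) ≤ ∑ i, c i * phi1 (g i) := by
  unfold phi1
  simp_rw [Finset.mul_sum]
  rw [Finset.sum_comm (f := fun i b => c i * (g i b * Real.log (g i b / ((∑ b, g i b) / 2))))]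
  refine Finset.sum_le_sum fun b _ => ?_
  have := logsum Finset.univ (fun i => c i * g i b) (fun i => c i * ((∑ b, g i b) / 2))
    (fun i => mul_nonneg (hc i) (hg i b))
    (fun i => mul_nonneg (hc i) (div_nonneg (Finset.sum_nonneg fun b _ => hg i b) zero_le_two)) (by
      intro i h
      rcases mul_eq_zero.1 h with h | h
      · simp [h]
      · have h' : ∑ b, g i b = 0 := by linarith
        rw [(Finset.sum_eq_zero_iff_of_nonneg fun b _ => hg i b).1 h' b (Finset.mem_univ b), mul_zero])
  have e : (∑ b, ∑ i, c i * g i b) / 2 = ∑ i, c i * ((∑ b, g i b) / 2) := by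
    rw [Finset.sum_comm, Finset.sum_div]
    refine Finset.sum_congr rfl fun i _ => ?_
    rw [← Finset.mul_sum]; ring
  rw [e]
  refine this.trans (le_of_eq ?_)
  refine Finset.sum_congr rfl fun i _ => ?_
  by_cases h : c i = 0
  · simp [h]
  · rw [mul_div_mul_left _ _ h, mul_assoc]

/-- d-bit functional -/
def phid {d : ℕ} (f : (Fin d → Bool) → ℝ) : ℝ := ∑ x, f x * Real.log (f x / ((1/2)^d * ∑ x, f x))

lemma sum_cons {d : ℕ} (f : (Fin (d+1) → Bool) → ℝ) :
    ∑ x, f x = ∑ x : Fin d → Bool, ∑ b, f (Fin.cons b x) := by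
  rw [← (Fin.consEquiv (fun _ : Fin (d+1) => Bool)).sum_comp, Fintype.sum_prod_type, Finset.sum_comm]
  rfl

lemma phid_succ {d : ℕ} (f : (Fin (d+1) → Bool) → ℝ) (hf : ∀ x, 0 ≤ f x) :
    phid f = phid (fun x : Fin d → Bool => ∑ b, f (Fin.cons b x)) +
      ∑ x : Fin d → Bool, phi1 (fun b => f (Fin.cons b x)) := by
  unfold phid phi1
  rw [sum_cons, ← sum_cons f, ← Finset.sum_add_distrib]
  refine Finset.sum_congr rfl fun x _ => ?_
  rw [Finset.sum_mul, ← Finset.sum_add_distrib]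
  refine Finset.sum_congr rfl fun b _ => ?_
  by_cases h : f (Fin.cons b x) = 0
  · simp [h]
  have h0 : 0 < f (Fin.cons b x) := lt_of_le_of_ne (hf _) (Ne.symm h)
  have h1 : 0 < ∑ b, f (Fin.cons b x) := lt_of_lt_of_le h0
    (Finset.single_le_sum (f := fun b => f (Fin.cons b x)) (fun b _ => hf _) (Finset.mem_univ b))
  have h2 : 0 < ∑ x, f x := lt_of_lt_of_le h0
    (Finset.single_le_sum (f := f) (fun b _ => hf _) (Finset.mem_univ _))
  rw [← mul_add, ← Real.log_mul (by positivity) (by positivity)]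
  congr 2
  rw [pow_succ]
  field_simp

lemma bm_nonneg (δ : ℝ) (hδ0 : 0 ≤ δ) (hδ1 : δ ≤ 1) (w x : Bool) : 0 ≤ bm δ w x := by
  unfold bm; split_ifs <;> linarith

lemma NN_nonneg (δ : ℝ) (hδ0 : 0 ≤ δ) (hδ1 : δ ≤ 1) {d : ℕ} (w x : Fin d → Bool) : 0 ≤ NN δ w x :=
  Finset.prod_nonneg fun _ _ => bm_nonneg δ hδ0 hδ1 _ _

lemma bm_symm (δ : ℝ) (w x : Bool) : bm δ w x = bm δ x w := by
  unfold bm; simp [eq_comm]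

lemma bm_sum (δ : ℝ) (w : Bool) : ∑ x, bm δ w x = 1 := by
  cases w <;> simp [bm]

lemma NN_symm (δ : ℝ) {d : ℕ} (w x : Fin d → Bool) : NN δ w x = NN δ x w := by
  unfold NN; simp [bm_symm δ (w _)]

lemma NN_cons (δ : ℝ) {d : ℕ} (b c : Bool) (w x : Fin d → Bool) :
    NN δ (Fin.cons b w : Fin (d+1) → Bool) (Fin.cons c x : Fin (d+1) → Bool) = bm δ b c * NN δ w x := by
  simp [NN, Fin.prod_univ_succ]

lemma NN_sum (δ : ℝ) {d : ℕ} (w : Fin d → Bool) : ∑ x, NN δ w x = 1 := by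
  induction d with
  | zero => simp [NN]
  | succ d ih =>
    rw [sum_cons]
    rw [← Fin.cons_self_tail w]
    simp_rw [NN_cons, ← Finset.sum_mul, bm_sum, one_mul]
    exact ih _

lemma NN_sto (δ : ℝ) (hδ0 : 0 ≤ δ) (hδ1 : δ ≤ 1) (d : ℕ) : Sto (NN δ (d := d)) :=
  ⟨NN_nonneg δ hδ0 hδ1, NN_sum δ⟩

lemma hyper (δ : ℝ) (hδ0 : 0 ≤ δ) (hδ1 : δ ≤ 1) {d : ℕ} (f : (Fin d → Bool) → ℝ)
    (hf : ∀ x, 0 ≤ f x) : phid (fun w => ∑ x, NN δ w x * f x) ≤ δ ^ 2 * phid f := by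
  induction d with
  | zero =>
    have e : ∀ g : (Fin 0 → Bool) → ℝ, phid g = 0 := by
      intro g; simp [phid]
    simp [e]
  | succ d ih =>
    have hg : ∀ w : Fin (d+1) → Bool, 0 ≤ ∑ x, NN δ w x * f x :=
      fun w => Finset.sum_nonneg fun x _ => mul_nonneg (NN_nonneg δ hδ0 hδ1 _ _) (hf x)
    rw [phid_succ _ hg, phid_succ f hf, mul_add]
    let g : (Fin d → Bool) → Bool → ℝ := fun w b => ∑ x, NN δ w x * f (Fin.cons b x)
    have hgn : ∀ w b, 0 ≤ g w b := fun w b =>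
      Finset.sum_nonneg fun x _ => mul_nonneg (NN_nonneg δ hδ0 hδ1 _ _) (hf _)
    have e1 : ∀ (b : Bool) (w : Fin d → Bool), ∑ x, NN δ (Fin.cons b w : Fin (d+1) → Bool) x * f x =
        ∑ c, bm δ b c * g w c := by
      intro b w
      rw [sum_cons, Finset.sum_comm]
      refine Finset.sum_congr rfl fun c _ => ?_
      simp only [g, Finset.mul_sum]
      refine Finset.sum_congr rfl fun x _ => ?_
      rw [NN_cons, mul_assoc]
    have e2 : ∀ w : Fin d → Bool, ∑ b, ∑ x, NN δ (Fin.cons b w : Fin (d+1) → Bool) x * f x =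
        ∑ x, NN δ w x * ∑ b, f (Fin.cons b x) := by
      intro w
      simp_rw [e1]
      rw [Finset.sum_comm]
      simp_rw [← Finset.sum_mul, bm_symm δ, bm_sum, one_mul, g]
      rw [Finset.sum_comm]
      simp_rw [Finset.mul_sum]
    refine add_le_add ?_ ?_
    · simp_rw [e2]
      exact ih (fun x => ∑ b, f (Fin.cons b x)) fun x => Finset.sum_nonneg fun b _ => hf _
    · simp_rw [e1]
      have h1 : ∀ w, phi1 (fun b => ∑ c, bm δ b c * g w c) ≤
          δ ^ 2 * ∑ x, NN δ w x * phi1 (fun b => f (Fin.cons b x)) := fun w =>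
        (phi1_bm δ hδ0 hδ1 (g w) (hgn w)).trans (mul_le_mul_of_nonneg_left
          (phi1_conv (NN δ w) (NN_nonneg δ hδ0 hδ1 w) (fun x b => f (Fin.cons b x)) (fun x b => hf _))
          (sq_nonneg δ))
      refine (Finset.sum_le_sum fun w _ => h1 w).trans (le_of_eq ?_)
      rw [← Finset.mul_sum, Finset.sum_comm]
      congr 1
      refine Finset.sum_congr rfl fun x _ => ?_
      rw [← Finset.sum_mul]
      simp_rw [NN_symm δ _ x]
      rw [NN_sum, one_mul]

lemma MI_comp {W Y B : Type*} [Fintype W] [Fintype Y] [Fintype B] (p : W → ℝ) (hp : ∀ i, 0 ≤ p i)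
    (M : W → Y → ℝ) (hM : Sto M)
    (G : Y → B → ℝ) {η : ℝ} (hG : SDPI G η) (hp1 : ∑ i, p i = 1) :
    MI p (fun w => push (M w) G) ≤ η * MI p M := by
  unfold MI
  rw [Finset.mul_sum]
  refine Finset.sum_le_sum fun w _ => ?_
  rcases (hp w).eq_or_lt with h | h
  · simp [← h]
  have e : push p (fun w => push (M w) G) = push (push p M) G := by
    funext b; unfold push
    simp_rw [Finset.mul_sum, Finset.sum_mul]
    rw [Finset.sum_comm]
    simp_rw [mul_assoc]
  rw [e]
  have := hG (M w) (push p M) (hM.1 w) (push_nonneg hp hM) (by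
    intro y hy
    have := (Finset.sum_eq_zero_iff_of_nonneg (fun a _ => mul_nonneg (hp a) (hM.1 a y))).1 hy w
      (Finset.mem_univ w)
    rcases mul_eq_zero.1 this with h' | h'
    · exact absurd h' h.ne'
    · exact h') (hM.2 w) (by rw [push_sum p hM, hp1])
  nlinarith [mul_le_mul_of_nonneg_left this h.le]

lemma MI_bsc (δ : ℝ) (hδ0 : 0 ≤ δ) (hδ1 : δ ≤ 1) {d : ℕ} {B : Type*} [Fintype B]
    (G : (Fin d → Bool) → B → ℝ) (hG : Sto G) :
    MI (fun _ => (1/2:ℝ)^d) (fun w => push (NN δ w) G) ≤ δ ^ 2 * MI (fun _ => (1/2:ℝ)^d) G := by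
  have e0 : push (fun _ => (1/2:ℝ)^d) (fun w => push (NN δ w) G) = push (fun _ => (1/2:ℝ)^d) G := by
    funext b; unfold push
    simp_rw [Finset.mul_sum]
    rw [Finset.sum_comm]
    refine Finset.sum_congr rfl fun x _ => ?_
    simp_rw [← Finset.mul_sum, ← Finset.sum_mul, NN_symm δ _ x]
    rw [NN_sum, one_mul]
  unfold MI kl
  rw [e0]
  simp_rw [← Finset.mul_sum]
  rw [mul_left_comm]
  refine mul_le_mul_of_nonneg_left ?_ (by positivity)
  rw [Finset.sum_comm, Finset.sum_comm (f := fun a b => G a b * Real.log _), Finset.mul_sum]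
  refine Finset.sum_le_sum fun b _ => ?_
  have := hyper δ hδ0 hδ1 (fun x => G x b) (fun x => hG.1 x b)
  unfold phid at this
  have e1 : ∑ w, ∑ x, NN δ w x * G x b = ∑ x, G x b := by
    rw [Finset.sum_comm]
    simp_rw [← Finset.sum_mul, NN_symm δ, NN_sum, one_mul]
  rw [e1, Finset.mul_sum] at this
  exact this

lemma kl_NN (δ : ℝ) (hδ0 : 0 ≤ δ) (hδ1 : δ ≤ 1) {d : ℕ} (w : Fin d → Bool) :
    kl (NN δ w) (fun _ => (1/2:ℝ)^d) = d * (Real.log 2 * (1 - binEnt ((1 - δ) / 2))) := by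
  have hl : Real.log 2 ≠ 0 := (Real.log_pos one_lt_two).ne'
  have bit : ∀ b, ∑ c, bm δ b c * Real.log (bm δ b c / (1/2)) = Real.log 2 * (1 - binEnt ((1 - δ) / 2)) := by
    have e : ∀ y : ℝ, y * Real.log (y / (1/2)) = y * Real.log y + y * Real.log 2 := by
      intro y
      rcases eq_or_ne y 0 with h | h
      · simp [h]
      · rw [div_div_eq_mul_div, div_one, Real.log_mul h two_ne_zero]; ring
    intro b
    simp_rw [e]
    unfold binEnt Real.negMulLog
    cases b <;> simp [bm] <;> field_simp <;> ring
  induction d with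
  | zero => simp [kl, NN]
  | succ d ih =>
    unfold kl
    rw [sum_cons, ← Fin.cons_self_tail w]
    set w' := Fin.tail w
    set b := w 0
    have h1 : ∀ (x : Fin d → Bool) (c : Bool), NN δ (Fin.cons b w' : Fin (d+1) → Bool) (Fin.cons c x : Fin (d+1) → Bool) *
        Real.log (NN δ (Fin.cons b w' : Fin (d+1) → Bool) (Fin.cons c x : Fin (d+1) → Bool) / (1/2)^(d+1)) =
        bm δ b c * (NN δ w' x * Real.log (NN δ w' x / (1/2)^d)) +
          bm δ b c * Real.log (bm δ b c / (1/2)) * NN δ w' x := by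
      intro x c
      rw [NN_cons]
      rcases eq_or_ne (bm δ b c) 0 with h | h
      · simp [h]
      rcases eq_or_ne (NN δ w' x) 0 with h' | h'
      · simp [h']
      rw [pow_succ', mul_div_mul_comm, Real.log_mul (by positivity) (by positivity)]
      ring
    simp_rw [h1, Finset.sum_add_distrib, ← Finset.sum_mul, bm_sum, one_mul, bit, ← Finset.mul_sum]
    rw [NN_sum]
    have := ih w'
    unfold kl at this
    rw [this]; push_cast; ring

lemma unif_sum (d : ℕ) : ∑ _x : Fin d → Bool, (1/2:ℝ)^d = 1 := by
  simp

lemma push_unif_NN (δ : ℝ) (d : ℕ) : push (fun _ => (1/2:ℝ)^d) (NN δ (d := d)) = fun _ => (1/2:ℝ)^d := by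
  funext b; unfold push
  simp_rw [← Finset.mul_sum, NN_symm δ _ b]
  rw [NN_sum, mul_one]

lemma MI_NN (δ : ℝ) (hδ0 : 0 ≤ δ) (hδ1 : δ ≤ 1) (d : ℕ) :
    MI (fun _ => (1/2:ℝ)^d) (NN δ (d := d)) = d * (Real.log 2 * (1 - binEnt ((1 - δ) / 2))) := by
  unfold MI
  simp_rw [push_unif_NN, kl_NN δ hδ0 hδ1, ← Finset.sum_mul]
  rw [unif_sum, one_mul]

/-- deterministic channel -/
def det {X Y : Type*} (f : X → Y) (x : X) (y : Y) : ℝ := if f x = y then 1 else 0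

lemma det_sto {X Y : Type*} [Fintype Y] (f : X → Y) : Sto (det f) :=
  ⟨fun y u => by unfold det; split_ifs <;> norm_num, fun y => by simp [det]⟩

lemma push_det {X Y B : Type*} [Fintype X] [Fintype Y] (f : X → Y) (G : Y → B → ℝ) (x : X) :
    push (det f x) G = G (f x) := by
  funext b; simp [push, det]

lemma push_push {W X Y : Type*} [Fintype W] [Fintype X] (p : W → ℝ) (M : W → X → ℝ)
    (G : X → Y → ℝ) : push (push p M) G = push p (fun w => push (M w) G) := by
  funext b; unfold push
  simp_rw [Finset.mul_sum, Finset.sum_mul]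
  rw [Finset.sum_comm]
  simp_rw [mul_assoc]

lemma MI_det_le {X Y : Type*} [Fintype X] [Fintype Y] (p : X → ℝ) (hp : ∀ i, 0 ≤ p i)
    (hp1 : ∑ i, p i = 1) (f : X → Y) : MI p (det f) ≤ Real.log (Fintype.card Y) := by
  have hd := det_sto f
  have hq := push_nonneg hp hd
  have hY : (0:ℝ) < Fintype.card Y := by
    have : Nonempty X := by
      by_contra h
      rw [not_nonempty_iff] at h
      simp at hp1
    have : Nonempty Y := this.map f
    exact_mod_cast Fintype.card_pos
  have h1 := kl_nonneg (push p (det f)) (fun _ => (Fintype.card Y : ℝ)⁻¹) hq (fun _ => by positivity)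
    (fun i h => absurd h (by positivity)) (by rw [push_sum p hd, hp1]) (by simp; field_simp)
  have h2 : MI p (det f) = - ∑ y, push p (det f) y * Real.log (push p (det f) y) := by
    unfold MI kl
    have : ∀ x, ∑ y, det f x y * Real.log (det f x y / push p (det f) y) =
        - ∑ y, det f x y * Real.log (push p (det f) y) := by
      intro x
      rw [← Finset.sum_neg_distrib]
      refine Finset.sum_congr rfl fun y _ => ?_
      unfold det
      split_ifs
      · simp
      · simp
    simp_rw [this]
    rw [show (∑ y, push p (det f) y * Real.log (push p (det f) y)) =
      ∑ y, ∑ x, p x * det f x y * Real.log (push p (det f) y) from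
        Finset.sum_congr rfl fun y _ => by rw [← Finset.sum_mul]; rfl]
    rw [Finset.sum_comm]
    simp_rw [mul_neg, Finset.mul_sum, mul_assoc, Finset.sum_neg_distrib]
  have h3 : kl (push p (det f)) (fun _ => (Fintype.card Y : ℝ)⁻¹) =
      ∑ y, push p (det f) y * Real.log (push p (det f) y) + Real.log (Fintype.card Y) := by
    have e : ∀ y, push p (det f) y * Real.log (push p (det f) y / (Fintype.card Y : ℝ)⁻¹) =
       push p (det f) y * Real.log (push p (det f) y) + push p (det f) y * Real.log (Fintype.card Y) := by
      intro y
      rcases eq_or_ne (push p (det f) y) 0 with h | h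
      · simp [h]
      · rw [div_inv_eq_mul, Real.log_mul h hY.ne']; ring
    unfold kl
    simp_rw [e]
    rw [Finset.sum_add_distrib, ← Finset.sum_mul, push_sum p hd, hp1, one_mul]
  linarith

end BinPart
section MeasPart

lemma ac_iff_fin {A : Type*} [MeasurableSpace A] [Fintype A] [MeasurableSingletonClass A]
    (ν m : Measure A) : ν ≪ m ↔ ∀ a, m {a} = 0 → ν {a} = 0 := by
  refine ⟨fun h a ha => h ha, fun h => ?_⟩
  refine Measure.AbsolutelyContinuous.mk fun s _ hs => ?_
  rw [← Set.biUnion_of_singleton s]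
  refine (measure_biUnion_null_iff (Set.to_countable s)).2 fun a ha => h a ?_
  exact measure_mono_null (Set.singleton_subset_iff.2 ha) hs

lemma klDiv2_eq {A : Type*} [MeasurableSpace A] [Fintype A] [MeasurableSingletonClass A]
    (ν m : Measure A) [IsFiniteMeasure ν] [IsFiniteMeasure m] (h : ν ≪ m) :
    klDiv2 ν m = ENNReal.ofReal (kl (fun a => ν.real {a}) (fun a => m.real {a}) / Real.log 2) := by
  unfold klDiv2
  rw [if_pos ⟨h, Integrable.of_finite⟩]
  congr 1
  rw [integral_fintype Integrable.of_finite]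
  unfold kl
  rw [Finset.sum_div]
  refine Finset.sum_congr rfl fun a _ => ?_
  rw [smul_eq_mul]
  by_cases hm : m {a} = 0
  · simp [Measure.real, h hm]
  have e : ν {a} = ν.rnDeriv m a * m {a} := by
    conv_lhs => rw [← Measure.withDensity_rnDeriv_eq ν m h]
    rw [withDensity_apply _ (measurableSet_singleton a), lintegral_singleton]
  have e2 : (ν.rnDeriv m a).toReal = ν.real {a} / m.real {a} := by
    unfold Measure.real
    rw [e, ENNReal.toReal_mul, mul_div_cancel_right₀]
    exact (ENNReal.toReal_ne_zero).2 ⟨hm, measure_ne_top _ _⟩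
  rw [e2, Real.logb, mul_div_assoc]

/-- measure from a real mass function -/
def mOf {A : Type*} [MeasurableSpace A] [Fintype A] (p : A → ℝ) : Measure A :=
  ∑ a, ENNReal.ofReal (p a) • Measure.dirac a

lemma mOf_singleton {A : Type*} [MeasurableSpace A] [Fintype A] [MeasurableSingletonClass A]
    (p : A → ℝ) (a : A) : mOf p {a} = ENNReal.ofReal (p a) := by
  unfold mOf
  simp [Measure.finsetSum_apply, Set.indicator_apply]

lemma mOf_real {A : Type*} [MeasurableSpace A] [Fintype A] [MeasurableSingletonClass A]
    (p : A → ℝ) (hp : ∀ a, 0 ≤ p a) (a : A) : (mOf p).real {a} = p a := by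
  rw [Measure.real, mOf_singleton, ENNReal.toReal_ofReal (hp a)]

lemma mOf_prob {A : Type*} [MeasurableSpace A] [Fintype A] [MeasurableSingletonClass A]
    (p : A → ℝ) (hp : ∀ a, 0 ≤ p a) (h1 : ∑ a, p a = 1) : IsProbabilityMeasure (mOf p) := by
  constructor
  unfold mOf
  simp [Measure.finsetSum_apply, ← ENNReal.ofReal_sum_of_nonneg fun a _ => hp a, h1]

/-- matrix of a kernel -/
def mat {A B : Type*} [MeasurableSpace A] [MeasurableSpace B] (K : Kernel A B) (a : A) (b : B) : ℝ :=
  (K a).real {b}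

lemma sum_real_singleton {A : Type*} [MeasurableSpace A] [Fintype A] [MeasurableSingletonClass A]
    (ν : Measure A) [IsProbabilityMeasure ν] : ∑ a, ν.real {a} = 1 := by
  rw [sum_measureReal_singleton]; simp

lemma mat_sto {A B : Type*} [MeasurableSpace A] [MeasurableSpace B] [Fintype B]
    [MeasurableSingletonClass B] (K : Kernel A B) [IsMarkovKernel K] : Sto (mat K) :=
  ⟨fun _ _ => measureReal_nonneg, fun a => sum_real_singleton (K a)⟩

lemma bind_real {A B : Type*} [MeasurableSpace A] [MeasurableSpace B] [Fintype A] [Fintype B]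
    [MeasurableSingletonClass A] [MeasurableSingletonClass B] (K : Kernel A B) [IsMarkovKernel K]
    (ν : Measure A) [IsProbabilityMeasure ν] (b : B) :
    (ν.bind K).real {b} = push (fun a => ν.real {a}) (mat K) b := by
  rw [Measure.real, Measure.bind_apply (measurableSet_singleton b) K.aemeasurable, lintegral_fintype,
    ENNReal.toReal_sum (fun a _ => ENNReal.mul_ne_top (measure_ne_top _ _) (measure_ne_top _ _))]
  unfold push mat Measure.real
  refine Finset.sum_congr rfl fun a _ => ?_
  rw [ENNReal.toReal_mul, mul_comm]

lemma ac_real {A : Type*} [MeasurableSpace A] [Fintype A] [MeasurableSingletonClass A]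
    {ν m : Measure A} [IsFiniteMeasure ν] [IsFiniteMeasure m] :
    ν ≪ m ↔ ∀ a, m.real {a} = 0 → ν.real {a} = 0 := by
  rw [ac_iff_fin]
  simp [measureReal_eq_zero_iff]

lemma klDiv2_bind_le {A B : Type*} [MeasurableSpace A] [MeasurableSpace B] [Fintype A] [Fintype B]
    [MeasurableSingletonClass A] [MeasurableSingletonClass B] (K : Kernel A B) [IsMarkovKernel K]
    (ν m : Measure A) [IsProbabilityMeasure ν] [IsProbabilityMeasure m] :
    klDiv2 (ν.bind K) (m.bind K) ≤ klDiv2 ν m := by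
  by_cases h : ν ≪ m
  · have hr := ac_real.1 h
    have h' : ν.bind K ≪ m.bind K := by
      rw [ac_real]
      intro b
      rw [bind_real, bind_real]
      exact push_ac (fun _ => measureReal_nonneg) (mat_sto K) hr b
    rw [klDiv2_eq _ _ h, klDiv2_eq _ _ h']
    refine ENNReal.ofReal_le_ofReal (div_le_div_of_nonneg_right ?_ (Real.log_pos one_lt_two).le)
    simp_rw [bind_real]
    exact kl_push_le _ _ _ (fun _ => measureReal_nonneg) (fun _ => measureReal_nonneg) (mat_sto K) hr
  · rw [klDiv2, klDiv2, if_neg (fun h' => h h'.1) (c := ν ≪ m ∧ _)]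
    exact le_top

lemma etaMax_le_one {A B : Type*} [MeasurableSpace A] [MeasurableSpace B] [Fintype A] [Fintype B]
    [MeasurableSingletonClass A] [MeasurableSingletonClass B] (K : Kernel A B) [IsMarkovKernel K] :
    etaMax K ≤ 1 := by
  unfold etaMax eta
  refine iSup_le fun m => iSup_le fun _ => iSup_le fun ν => iSup_le fun _ => iSup_le fun _ => ?_
  refine ENNReal.div_le_of_le_mul ?_
  rw [one_mul]
  exact klDiv2_bind_le K ν m

lemma etaMax_sdpi {A B : Type*} [MeasurableSpace A] [MeasurableSpace B] [Fintype A] [Fintype B]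
    [MeasurableSingletonClass A] [MeasurableSingletonClass B] (K : Kernel A B) [IsMarkovKernel K] :
    SDPI (mat K) (etaMax K).toReal := by
  intro p q hp hq hac hp1 hq1
  have := mOf_prob p hp hp1
  have := mOf_prob q hq hq1
  have hl := Real.log_pos one_lt_two
  have hacm : mOf p ≪ mOf q := by
    rw [ac_real]; intro a; rw [mOf_real p hp, mOf_real q hq]; exact hac a
  have hac' : (mOf p).bind K ≪ (mOf q).bind K := by
      rw [ac_real]
      intro b
      rw [bind_real, bind_real]
      exact push_ac (fun _ => measureReal_nonneg) (mat_sto K) (ac_real.1 hacm) b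
  have e1 : klDiv2 (mOf p) (mOf q) = ENNReal.ofReal (kl p q / Real.log 2) := by
    rw [klDiv2_eq _ _ hacm]; simp_rw [mOf_real p hp, mOf_real q hq]
  have e2 : klDiv2 ((mOf p).bind K) ((mOf q).bind K) =
      ENNReal.ofReal (kl (push p (mat K)) (push q (mat K)) / Real.log 2) := by
    rw [klDiv2_eq _ _ hac']; simp_rw [bind_real, mOf_real p hp, mOf_real q hq]
  have hmono := kl_push_le p q (mat K) hp hq (mat_sto K) hac
  have hpos := kl_nonneg p q hp hq hac hp1 hq1
  rcases hpos.eq_or_lt with h0 | h0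
  · rw [← h0, mul_zero]; linarith
  have hne : mOf p ≠ mOf q := by
    intro h
    have : p = q := by
      funext a; rw [← mOf_real p hp a, h, mOf_real q hq a]
    rw [this] at h0
    have : kl q q = 0 := Finset.sum_eq_zero fun a _ => by
      rcases eq_or_ne (q a) 0 with h | h
      · simp [h]
      · simp [div_self h]
    linarith
  have hle : klDiv2 ((mOf p).bind K) ((mOf q).bind K) / klDiv2 (mOf p) (mOf q) ≤ etaMax K := by
    unfold etaMax eta
    refine le_iSup_of_le (mOf q) (le_iSup_of_le inferInstance (le_iSup_of_le (mOf p)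
      (le_iSup_of_le inferInstance (le_iSup_of_le hne le_rfl))))
  have hη : etaMax K ≠ ⊤ := ((etaMax_le_one K).trans_lt ENNReal.one_lt_top).ne
  rw [e1, e2, ENNReal.div_le_iff (by simpa using div_pos h0 hl) ENNReal.ofReal_ne_top,
    ← ENNReal.ofReal_toReal hη, ← ENNReal.ofReal_mul ENNReal.toReal_nonneg,
    ENNReal.ofReal_le_ofReal_iff (by positivity), ← mul_div_assoc, div_le_div_iff_of_pos_right hl] at hle
  exact hle

lemma joint_fst {A B : Type*} [MeasurableSpace A] [MeasurableSpace B] [Fintype A] [Fintype B]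
    [MeasurableSingletonClass A] [MeasurableSingletonClass B] (J : Measure (A × B)) [IsFiniteMeasure J]
    (a : A) : (J.map Prod.fst).real {a} = ∑ b, J.real {(a, b)} := by
  rw [Measure.real, Measure.map_apply measurable_fst (measurableSet_singleton a)]
  have : (Prod.fst ⁻¹' {a} : Set (A × B)) = ((Finset.univ : Finset B).image (fun b => (a, b)) : Finset (A × B)) := by
    ext ⟨x, y⟩; simp [eq_comm]
  rw [this, ← Measure.real, ← sum_measureReal_singleton, Finset.sum_image]
  intro x _ y _ h; simpa using h

lemma joint_snd {A B : Type*} [MeasurableSpace A] [MeasurableSpace B] [Fintype A] [Fintype B]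
    [MeasurableSingletonClass A] [MeasurableSingletonClass B] (J : Measure (A × B)) [IsFiniteMeasure J]
    (b : B) : (J.map Prod.snd).real {b} = ∑ a, J.real {(a, b)} := by
  rw [Measure.real, Measure.map_apply measurable_snd (measurableSet_singleton b)]
  have : (Prod.snd ⁻¹' {b} : Set (A × B)) = ((Finset.univ : Finset A).image (fun a => (a, b)) : Finset (A × B)) := by
    ext ⟨x, y⟩; simp [eq_comm]
  rw [this, ← Measure.real, ← sum_measureReal_singleton, Finset.sum_image]
  intro x _ y _ h; simpa using h

lemma MI_nonneg {A B : Type*} [Fintype A] [Fintype B] (p : A → ℝ) (k : A → B → ℝ)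
    (hp : ∀ a, 0 ≤ p a) (hk : Sto k) (hp1 : ∑ a, p a = 1) : 0 ≤ MI p k := by
  refine Finset.sum_nonneg fun a _ => ?_
  rcases (hp a).eq_or_lt with h | h
  · simp [← h]
  refine mul_nonneg (hp a) (kl_nonneg _ _ (hk.1 a) (push_nonneg hp hk) ?_ (hk.2 a)
    (by rw [push_sum p hk, hp1]))
  intro b hb
  have := (Finset.sum_eq_zero_iff_of_nonneg (fun a _ => mul_nonneg (hp a) (hk.1 a b))).1 hb a
      (Finset.mem_univ a)
  rcases mul_eq_zero.1 this with h' | h'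
  · exact absurd h' h.ne'
  · exact h'

lemma miM_eq {A B : Type*} [MeasurableSpace A] [MeasurableSpace B] [Fintype A] [Fintype B]
    [MeasurableSingletonClass A] [MeasurableSingletonClass B] (J : Measure (A × B))
    [IsProbabilityMeasure J] (p : A → ℝ) (k : A → B → ℝ) (hp : ∀ a, 0 ≤ p a) (hk : Sto k)
    (hp1 : ∑ a, p a = 1) (hJ : ∀ a b, J.real {(a, b)} = p a * k a b) :
    (miM J).toReal = MI p k / Real.log 2 := by
  have h1 : ∀ a, (J.map Prod.fst).real {a} = p a := by
    intro a; rw [joint_fst]; simp_rw [hJ]; rw [← Finset.mul_sum, hk.2, mul_one]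
  have h2 : ∀ b, (J.map Prod.snd).real {b} = push p k b := by
    intro b; rw [joint_snd]; simp_rw [hJ]; rfl
  have h3 : ∀ x : A × B, ((J.map Prod.fst).prod (J.map Prod.snd)).real {x} = p x.1 * push p k x.2 := by
    rintro ⟨a, b⟩
    rw [← Set.singleton_prod_singleton, measureReal_prod_prod, h1, h2]
  have : IsProbabilityMeasure (J.map Prod.fst) := Measure.isProbabilityMeasure_map measurable_fst.aemeasurable
  have : IsProbabilityMeasure (J.map Prod.snd) := Measure.isProbabilityMeasure_map measurable_snd.aemeasurable
  have hac : J ≪ (J.map Prod.fst).prod (J.map Prod.snd) := by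
    rw [ac_real]
    rintro ⟨a, b⟩ h
    rw [h3] at h
    rw [hJ]
    rcases mul_eq_zero.1 h with h | h
    · simp only at h; rw [h, zero_mul]
    · exact (Finset.sum_eq_zero_iff_of_nonneg (fun a _ => mul_nonneg (hp a) (hk.1 a b))).1 h a
        (Finset.mem_univ a)
  have hMI : kl (fun x => J.real {x}) (fun x => ((J.map Prod.fst).prod (J.map Prod.snd)).real {x}) =
      MI p k := by
    unfold kl MI
    rw [Fintype.sum_prod_type]
    refine Finset.sum_congr rfl fun a _ => ?_
    unfold kl
    rw [Finset.mul_sum]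
    refine Finset.sum_congr rfl fun b _ => ?_
    beta_reduce
    rw [h3, hJ]
    rcases eq_or_ne (p a) 0 with h | h
    · simp [h]
    · rw [mul_div_mul_left _ _ h, mul_assoc]
  rw [miM, klDiv2_eq _ _ hac, hMI, ENNReal.toReal_ofReal]
  exact div_nonneg (MI_nonneg p k hp hk hp1) (Real.log_pos one_lt_two).le

lemma MI_le_crude {A B : Type*} [Fintype A] [Fintype B] (p : A → ℝ) (k : A → B → ℝ)
    (hp : ∀ a, 0 ≤ p a) (hk : Sto k) (hp1 : ∑ a, p a = 1) : MI p k ≤ Fintype.card B := by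
  have h : ∀ a, p a * kl (k a) (push p k) ≤ ∑ b, p a * k a b * -Real.log (push p k b) := by
    intro a
    unfold kl
    rw [Finset.mul_sum]
    refine Finset.sum_le_sum fun b _ => ?_
    rw [mul_assoc]
    rcases (hp a).eq_or_lt with h | h
    · simp [← h]
    refine mul_le_mul_of_nonneg_left ?_ h.le
    rcases (hk.1 a b).eq_or_lt with h' | h'
    · simp [← h']
    refine mul_le_mul_of_nonneg_left ?_ h'.le
    have hq : 0 < push p k b := lt_of_lt_of_le (mul_pos h h') (Finset.single_le_sum
      (f := fun a => p a * k a b) (fun a _ => mul_nonneg (hp a) (hk.1 a b)) (Finset.mem_univ a))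
    rw [Real.log_div h'.ne' hq.ne']
    have : Real.log (k a b) ≤ 0 := Real.log_nonpos h'.le (by
      rw [← hk.2 a]; exact Finset.single_le_sum (f := k a) (fun b _ => hk.1 a b) (Finset.mem_univ b))
    linarith
  refine (Finset.sum_le_sum fun a _ => h a).trans ?_
  rw [Finset.sum_comm]
  have h2 : ∀ b, ∑ a, p a * k a b * -Real.log (push p k b) ≤ 1 := by
    intro b
    rw [← Finset.sum_mul]
    change push p k b * _ ≤ 1
    have h0 := push_nonneg hp hk b
    rcases h0.eq_or_lt with h | h
    · simp [← h]
    have := Real.log_le_sub_one_of_pos (inv_pos.2 h)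
    rw [Real.log_inv] at this
    have h3 := mul_le_mul_of_nonneg_left this h.le
    have h4 : push p k b * ((push p k b)⁻¹ - 1) = 1 - push p k b := by field_simp
    linarith
  refine (Finset.sum_le_sum fun b _ => h2 b).trans (by simp)

lemma cap_bound {A B : Type*} [MeasurableSpace A] [MeasurableSpace B] [Fintype A] [Fintype B]
    [MeasurableSingletonClass A] [MeasurableSingletonClass B] (K : Kernel A B) [IsMarkovKernel K]
    (p : A → ℝ) (hp : ∀ a, 0 ≤ p a) (hp1 : ∑ a, p a = 1) :
    MI p (mat K) ≤ capacity K * Real.log 2 := by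
  have hl := Real.log_pos one_lt_two
  have key : ∀ ν : ProbabilityMeasure A, (miM ((ν : Measure A) ⊗ₘ K)).toReal =
      MI (fun a => (ν : Measure A).real {a}) (mat K) / Real.log 2 := by
    intro ν
    refine miM_eq _ _ _ (fun _ => measureReal_nonneg) (mat_sto K) (sum_real_singleton _) ?_
    intro a b
    rw [← Set.singleton_prod_singleton, Measure.real,
      Measure.compProd_apply_prod (measurableSet_singleton a) (measurableSet_singleton b),
      lintegral_singleton, ENNReal.toReal_mul, mul_comm]
    rfl
  have hb : BddAbove (Set.range fun ν : ProbabilityMeasure A => (miM ((ν : Measure A) ⊗ₘ K)).toReal) := by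
    refine ⟨Fintype.card B / Real.log 2, ?_⟩
    rintro _ ⟨ν, rfl⟩
    simp only
    rw [key, div_le_div_iff_of_pos_right hl]
    exact MI_le_crude _ _ (fun _ => measureReal_nonneg) (mat_sto K) (sum_real_singleton _)
  have := mOf_prob p hp hp1
  have h : (miM ((mOf p) ⊗ₘ K)).toReal ≤ capacity K :=
    le_ciSup hb (⟨mOf p, this⟩ : ProbabilityMeasure A)
  have hkey : (miM ((mOf p) ⊗ₘ K)).toReal = MI (fun a => (mOf p).real {a}) (mat K) / Real.log 2 :=
    key (⟨mOf p, this⟩ : ProbabilityMeasure A)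
  rw [hkey, div_le_iff₀ hl] at h
  simp_rw [mOf_real p hp] at h
  exact h

lemma bsc_real (δ : ℝ) (hδ0 : 0 ≤ δ) (hδ1 : δ ≤ 1) (w x : Bool) :
    (bsc ((1 - δ) / 2) w) {x} = ENNReal.ofReal (bm δ w x) := by
  have : (bsc ((1 - δ) / 2) w) = (ENNReal.ofReal ((1 - δ) / 2)) • Measure.dirac (!w) +
    (ENNReal.ofReal (1 - (1 - δ) / 2)) • Measure.dirac w := rfl
  rw [this]
  cases w <;> cases x <;> simp [bm]

lemma bsc_fin (ε : ℝ) (w : Bool) : IsFiniteMeasure (bsc ε w) := by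
  have : (bsc ε w) = (ENNReal.ofReal ε) • Measure.dirac (!w) +
    (ENNReal.ofReal (1 - ε)) • Measure.dirac w := rfl
  rw [this]
  constructor
  simp

lemma bern_fin (ε : ℝ) : IsFiniteMeasure (bern ε) := by
  unfold bern
  constructor
  simp

lemma pi_bsc (δ : ℝ) (hδ0 : 0 ≤ δ) (hδ1 : δ ≤ 1) {d : ℕ} (w x : Fin d → Bool) :
    (Measure.pi fun j : Fin d => bsc ((1 - δ) / 2) (w j)).real {x} = NN δ w x := by
  have := fun j => bsc_fin ((1 - δ) / 2) (w j)
  rw [Measure.real, Measure.pi_singleton, ENNReal.toReal_prod]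
  refine Finset.prod_congr rfl fun j _ => ?_
  rw [bsc_real δ hδ0 hδ1, ENNReal.toReal_ofReal (bm_nonneg δ hδ0 hδ1 _ _)]

lemma pi_bern {d : ℕ} (w : Fin d → Bool) :
    (Measure.pi fun _ : Fin d => bern (1 / 2)).real {w} = (1/2)^d := by
  have := fun j : Fin d => bern_fin (1/2)
  rw [Measure.real, Measure.pi_singleton, ENNReal.toReal_prod]
  have : ∀ b, (bern (1/2) {b}).toReal = 1/2 := by
    intro b; cases b <;> simp [bern] <;> norm_num
  simp_rw [this]
  simp

lemma cond_real {Ω A B : Type*} [MeasurableSpace Ω] [MeasurableSpace A] [MeasurableSpace B]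
    [MeasurableSingletonClass A] [MeasurableSingletonClass B] [StandardBorelSpace B] [Nonempty B]
    (μ : Measure Ω) [IsProbabilityMeasure μ] (Z : Ω → A) (Y : Ω → B) (hZ : Measurable Z)
    (hY : Measurable Y) (κ : A → Measure B)
    (h : ∀ᵐ z ∂(μ.map Z), condDistrib Y Z μ z = κ z) (a : A) (b : B) :
    μ.real {ω | Z ω = a ∧ Y ω = b} = μ.real {ω | Z ω = a} * (κ a).real {b} := by
  have hc := compProd_map_condDistrib (mβ := inferInstance) (μ := μ) (X := Z) hY.aemeasurable
  have h1 : (μ.map Z ⊗ₘ condDistrib Y Z μ).real {(a, b)} = μ.real {ω | Z ω = a ∧ Y ω = b} := by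
    rw [hc, Measure.real, Measure.map_apply (hZ.prodMk hY) (measurableSet_singleton _), Measure.real]
    congr 2
    ext ω; simp
  have h2 : (μ.map Z) {a} = μ {ω | Z ω = a} := by
    rw [Measure.map_apply hZ (measurableSet_singleton _)]; rfl
  rw [← h1, ← Set.singleton_prod_singleton, Measure.real,
      Measure.compProd_apply_prod (measurableSet_singleton a) (measurableSet_singleton b),
      lintegral_singleton, ENNReal.toReal_mul, h2, mul_comm]
  by_cases h0 : μ {ω | Z ω = a} = 0
  · simp [Measure.real, h0]
  · have : condDistrib Y Z μ a = κ a := by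
      by_contra hne
      apply h0
      rw [← h2]
      exact measure_mono_null (Set.singleton_subset_iff.2 hne) (ae_iff.1 h)
    rw [this]; rfl

end MeasPart
section MainPart

instance kernelPi_markov {A B : Type*} [MeasurableSpace A] [MeasurableSpace B] [Countable A]
    [MeasurableSingletonClass A] (T : ℕ) (K : Kernel A B) [IsMarkovKernel K] :
    IsMarkovKernel (kernelPi T K) :=
  ⟨fun u => by
    change IsProbabilityMeasure (Measure.pi fun t => K (u t))
    infer_instance⟩

lemma FB_prod {Y U V : Type*} (k : U → V → ℝ) (φ : (t : ℕ) → Y → (Fin t → V) → U)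
    (u : ℕ → Y → U) (hφ : ∀ t y v, φ t y v = u t y) (T : ℕ) (y : Y) (v : Fin T → V) :
    FB k φ T y v = ∏ s : Fin T, k (u s y) (v s) := by
  induction T with
  | zero => simp [FB]
  | succ T ih => rw [FB, ih, hφ, Fin.prod_univ_castSucc]; simp

lemma FB_sdpi_nofb {Y U V : Type*} [Fintype Y] [MeasurableSpace U] [Fintype U]
    [MeasurableSingletonClass U] [MeasurableSpace V] [Fintype V] [MeasurableSingletonClass V]
    (K : Kernel U V) [IsMarkovKernel K] (φ : (t : ℕ) → Y → (Fin t → V) → U)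
    (u : ℕ → Y → U) (hφ : ∀ t y v, φ t y v = u t y) (T : ℕ) :
    SDPI (FB (mat K) φ T) (etaMax (kernelPi T K)).toReal := by
  intro p q hp hq hac hp1 hq1
  have e : ∀ r : Y → ℝ, push r (FB (mat K) φ T) =
      push (push r (det fun y (s : Fin T) => u s y)) (mat (kernelPi T K)) := by
    intro r
    rw [push_push]
    simp_rw [push_det]
    congr 1
    funext y v
    rw [FB_prod _ φ u hφ]
    change _ = (Measure.pi fun t : Fin T => K (u t y)).real {v}
    rw [Measure.real, Measure.pi_singleton, ENNReal.toReal_prod]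
    rfl
  rw [e, e]
  have hd := det_sto (fun y (s : Fin T) => u s y)
  refine (etaMax_sdpi (kernelPi T K) _ _ (push_nonneg hp hd) (push_nonneg hq hd)
    (push_ac hq hd hac) (by rw [push_sum p hd, hp1]) (by rw [push_sum q hd, hq1])).trans ?_
  exact mul_le_mul_of_nonneg_left (kl_push_le p q _ hp hq hd hac) ENNReal.toReal_nonneg

lemma joint_eq {Ω U' V' : Type*} [MeasurableSpace Ω]
    [MeasurableSpace U'] [Fintype U'] [MeasurableSingletonClass U']
    [MeasurableSpace V'] [Fintype V'] [MeasurableSingletonClass V'] [Nonempty V']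
    (μ : Measure Ω) [IsProbabilityMeasure μ]
    (K : Kernel U' V') [IsMarkovKernel K]
    (d b T : ℕ) (δ : ℝ) (hδ0 : 0 ≤ δ) (hδ1 : δ ≤ 1)
    (W X : Ω → Fin d → Bool) (U : ℕ → Ω → U') (V : ℕ → Ω → V')
    (hW : Measurable W) (hX : Measurable X)
    (hU : ∀ t, Measurable (U t)) (hV : ∀ t, Measurable (V t))
    (hPrior : μ.map W = Measure.pi fun _ : Fin d => bern (1 / 2))
    (hSample : ∀ᵐ w ∂(μ.map W),
      condDistrib X W μ w = Measure.pi fun j : Fin d => bsc ((1 - δ) / 2) (w j))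
    (φQ : (Fin d → Bool) → Fin (2 ^ b))
    (φE : (t : ℕ) → Fin (2 ^ b) → (Fin t → V') → U')
    (hEnc : ∀ t, t < T → ∀ ω, U t ω = φE t (φQ (X ω)) fun s : Fin t => V s ω)
    (hChannel : ∀ t, t < T →
      ∀ᵐ p ∂(μ.map fun ω => ((W ω, X ω, fun s : Fin t => V s ω), U t ω)),
        condDistrib (V t) (fun ω => ((W ω, X ω, fun s : Fin t => V s ω), U t ω)) μ p = K p.2)
    (t : ℕ) (ht : t ≤ T) (w x : Fin d → Bool) (v : Fin t → V') :
    μ.real {ω | W ω = w ∧ X ω = x ∧ (fun s : Fin t => V s ω) = v} =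
      (1/2)^d * NN δ w x * FB (mat K) (fun t x v => φE t (φQ x) v) t x v := by
  induction t with
  | zero =>
    have h1 := cond_real μ W X hW hX _ hSample w x
    rw [pi_bsc δ hδ0 hδ1] at h1
    have h2 : μ.real {ω | W ω = w} = (1/2)^d := by
      rw [← pi_bern w, ← hPrior, Measure.real, Measure.real,
        Measure.map_apply hW (measurableSet_singleton w)]
      rfl
    rw [h2] at h1
    rw [FB, mul_one, ← h1]
    congr 1
    ext ω
    simp [Subsingleton.elim (fun s : Fin 0 => V s ω) v]
  | succ t ih =>
    have ih' := ih (by omega) (fun i => v i.castSucc)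
    have hlt : t < T := by omega
    have hZ : Measurable fun ω => ((W ω, X ω, fun s : Fin t => V s ω), U t ω) :=
      (hW.prodMk (hX.prodMk (measurable_pi_lambda (fun ω (s : Fin t) => V s ω) fun s => hV s))).prodMk (hU t)
    have h1 := cond_real μ _ (V t) hZ (hV t) (fun p => K p.2) (hChannel t hlt)
      ((w, x, fun i => v i.castSucc), φE t (φQ x) (fun i => v i.castSucc)) (v (Fin.last t))
    have e1 : {ω | ((W ω, X ω, fun s : Fin t => V s ω), U t ω) =
        ((w, x, fun i => v i.castSucc), φE t (φQ x) (fun i => v i.castSucc))} =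
        {ω | W ω = w ∧ X ω = x ∧ (fun s : Fin t => V s ω) = fun i => v i.castSucc} := by
      ext ω
      simp only [Set.mem_setOf_eq, Prod.mk.injEq]
      constructor
      · exact fun h => h.1
      · intro h
        refine ⟨h, ?_⟩
        rw [hEnc t hlt ω, h.2.1, h.2.2]
    have e2 : {ω | ((W ω, X ω, fun s : Fin t => V s ω), U t ω) =
        ((w, x, fun i => v i.castSucc), φE t (φQ x) (fun i => v i.castSucc)) ∧
          V t ω = v (Fin.last t)} =
        {ω | W ω = w ∧ X ω = x ∧ (fun s : Fin (t+1) => V s ω) = v} := by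
      ext ω
      have := Set.ext_iff.1 e1 ω
      rw [Set.mem_setOf_eq] at this
      rw [Set.mem_setOf_eq, this]
      simp only [Set.mem_setOf_eq]
      rw [and_assoc, and_assoc]
      refine and_congr_right fun _ => and_congr_right fun _ => ?_
      constructor
      · rintro ⟨h1, h2⟩
        funext s
        refine Fin.lastCases ?_ (fun i => ?_) s
        · simpa using h2
        · simpa using congrFun h1 i
      · rintro rfl
        exact ⟨rfl, rfl⟩
    rw [e1, e2, ih'] at h1
    rw [h1, FB, mul_assoc, mul_assoc, mul_assoc]
    rfl

end MainPart

/-- Corollary 5. Estimating a discrete parameter: `W` uniform on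
`{-1,1}^d` (modeled as `Bool^d`), the sample `X ∈ {-1,1}^d` is obtained by passing each
coordinate of `W` through `BSC((1-δ)/2)`; the processor quantizes `X` to a `b`-bit message
and sends it over `T` uses of a DMC `K` with capacity `C`. Then for any quantizer/encoder,
`I(W; V^T) ≤ min { d (1 − h₂((1−δ)/2)) η_T, δ² b η_T, δ² C T }`,
with `η_T = 1 − (1 − η(K))^T` (feedback) or `η_T = η(K^{⊗T})` (no feedback). -/
theorem discrete_param_mi_upper_bound
    {Ω U' V' : Type*} [MeasurableSpace Ω]
    [MeasurableSpace U'] [Fintype U'] [MeasurableSingletonClass U'] [Nonempty U']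
    [MeasurableSpace V'] [Fintype V'] [MeasurableSingletonClass V'] [Nonempty V']
    (μ : Measure Ω) [IsProbabilityMeasure μ]
    (K : Kernel U' V') [IsMarkovKernel K]
    (d b T : ℕ) (δ : ℝ) (hδ0 : 0 ≤ δ) (hδ1 : δ ≤ 1)
    (W X : Ω → Fin d → Bool) (U : ℕ → Ω → U') (V : ℕ → Ω → V')
    (hW : Measurable W) (hX : Measurable X)
    (hU : ∀ t, Measurable (U t)) (hV : ∀ t, Measurable (V t))
    (hPrior : μ.map W = Measure.pi fun _ : Fin d => bern (1 / 2))
    (hSample : ∀ᵐ w ∂(μ.map W),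
      condDistrib X W μ w = Measure.pi fun j : Fin d => bsc ((1 - δ) / 2) (w j))
    (φQ : (Fin d → Bool) → Fin (2 ^ b))
    (φE : (t : ℕ) → Fin (2 ^ b) → (Fin t → V') → U')
    (hEnc : ∀ t, t < T → ∀ ω, U t ω = φE t (φQ (X ω)) fun s : Fin t => V s ω)
    (hChannel : ∀ t, t < T →
      ∀ᵐ p ∂(μ.map fun ω => ((W ω, X ω, fun s : Fin t => V s ω), U t ω)),
        condDistrib (V t) (fun ω => ((W ω, X ω, fun s : Fin t => V s ω), U t ω)) μ p = K p.2)
    (ηT : ℝ)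
    (hηT : ηT = 1 - (1 - (etaMax K).toReal) ^ T ∨
      ((∀ t y v v', φE t y v = φE t y v') ∧ ηT = (etaMax (kernelPi T K)).toReal)) :
    mi μ W (fun ω (t : Fin T) => V t ω) ≤
      min ((d : ℝ) * (1 - binEnt ((1 - δ) / 2)) * ηT)
        (min (δ ^ 2 * b * ηT) (δ ^ 2 * capacity K * T)) := by
  have hl := Real.log_pos one_lt_two
  have hk := mat_sto K
  have hF := FB_sto (mat K) hk (fun t x v => φE t (φQ x) v) T
  have hN := NN_sto δ hδ0 hδ1 d
  have hu0 : ∀ w : Fin d → Bool, (0:ℝ) ≤ (1/2:ℝ)^d := fun _ => by positivity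
  have hM : Sto (fun w => push (NN δ w) (FB (mat K) (fun t x v => φE t (φQ x) v) T)) :=
    ⟨fun w => push_nonneg (hN.1 w) hF, fun w => by rw [push_sum _ hF, hN.2]⟩
  have hVT : Measurable fun ω (t : Fin T) => V t ω := measurable_pi_lambda _ fun s => hV s
  have hmi : mi μ W (fun ω (t : Fin T) => V t ω) =
      MI (fun _ => (1/2:ℝ)^d) (fun w => push (NN δ w) (FB (mat K) (fun t x v => φE t (φQ x) v) T)) /
        Real.log 2 := by
    have : IsProbabilityMeasure (μ.map fun ω => (W ω, fun t : Fin T => V t ω)) :=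
      Measure.isProbabilityMeasure_map (hW.prodMk hVT).aemeasurable
    refine miM_eq _ _ _ hu0 hM (unif_sum d) ?_
    intro w v
    have hm3 : Measurable fun ω => ((W ω, fun t : Fin T => V t ω), X ω) := (hW.prodMk hVT).prodMk hX
    have := joint_fst (μ.map fun ω => ((W ω, fun t : Fin T => V t ω), X ω)) (w, v)
    rw [Measure.map_map measurable_fst hm3] at this
    refine this.trans ?_
    unfold push
    rw [Finset.mul_sum]
    refine Finset.sum_congr rfl fun x _ => ?_
    rw [← mul_assoc, ← joint_eq μ K d b T δ hδ0 hδ1 W X U V hW hX hU hV hPrior hSample φQ φE hEnc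
      hChannel T le_rfl w x v, Measure.real, Measure.map_apply hm3 (measurableSet_singleton _),
      Measure.real]
    congr 2
    ext ω
    simp only [Set.mem_preimage, Set.mem_singleton_iff, Prod.mk.injEq, Set.mem_setOf_eq]
    tauto
  have hη1 : (etaMax K).toReal ≤ 1 := by
    have := ENNReal.toReal_mono ENNReal.one_ne_top (etaMax_le_one K)
    simpa using this
  have hη0 : 0 ≤ (etaMax K).toReal := ENNReal.toReal_nonneg
  have hηT0 : 0 ≤ ηT := by
    rcases hηT with h | ⟨_, h⟩
    · rw [h]
      have : (1 - (etaMax K).toReal) ^ T ≤ 1 := pow_le_one₀ (by linarith) (by linarith)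
      linarith
    · rw [h]; exact ENNReal.toReal_nonneg
  have hS1 : SDPI (FB (mat K) (fun t x v => φE t (φQ x) v) T) ηT := by
    rcases hηT with h | ⟨h', h⟩
    · rw [h]; exact FB_sdpi _ hk _ hη0 hη1 (etaMax_sdpi K) T
    · rw [h]
      exact FB_sdpi_nofb K _ (fun t x => φE t (φQ x) (fun _ => Classical.arbitrary V'))
        (fun t y v => h' _ _ _ _) T
  have hS2 : SDPI (FB (mat K) φE T) ηT := by
    rcases hηT with h | ⟨h', h⟩
    · rw [h]; exact FB_sdpi _ hk _ hη0 hη1 (etaMax_sdpi K) T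
    · rw [h]
      exact FB_sdpi_nofb K _ (fun t x => φE t x (fun _ => Classical.arbitrary V'))
        (fun t y v => h' _ _ _ _) T
  have hFF : ∀ t x v, FB (mat K) (fun t x v => φE t (φQ x) v) t x v = FB (mat K) φE t (φQ x) v := by
    intro t x v
    induction t with
    | zero => rfl
    | succ t ih => rw [FB, FB, ih]
  rw [hmi]
  refine le_min ?_ (le_min ?_ ?_)
  · rw [div_le_iff₀ hl]
    refine (MI_comp _ hu0 _ hN _ hS1 (unif_sum d)).trans (le_of_eq ?_)
    rw [MI_NN δ hδ0 hδ1]; ring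
  · rw [div_le_iff₀ hl]
    have hD := det_sto φQ
    have e : (fun w => push (NN δ w) (FB (mat K) (fun t x v => φE t (φQ x) v) T)) =
        fun w => push ((fun w => push (NN δ w) (det φQ)) w) (FB (mat K) φE T) := by
      funext w
      simp only
      rw [push_push]
      simp_rw [push_det]
      congr 1
      funext x v
      exact hFF T x v
    rw [e]
    refine (MI_comp _ hu0 _ ⟨fun w => push_nonneg (hN.1 w) hD, fun w => by rw [push_sum _ hD, hN.2]⟩
      _ hS2 (unif_sum d)).trans ?_
    have h1 := MI_bsc δ hδ0 hδ1 (det φQ) hD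
    have h2 := MI_det_le (fun _ => (1/2:ℝ)^d) hu0 (unif_sum d) φQ
    rw [Fintype.card_fin] at h2
    push_cast at h2
    rw [Real.log_pow] at h2
    have h3 := h1.trans (mul_le_mul_of_nonneg_left h2 (sq_nonneg δ))
    refine (mul_le_mul_of_nonneg_left h3 hηT0).trans (le_of_eq (by ring))
  · rw [div_le_iff₀ hl]
    refine (MI_bsc δ hδ0 hδ1 _ hF).trans ?_
    have h1 := FB_cap (mat K) hk (fun t x v => φE t (φQ x) v) (cap_bound K) _ hu0 (unif_sum d) T
    refine (mul_le_mul_of_nonneg_left h1 (sq_nonneg δ)).trans (le_of_eq (by ring))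


end DecEst
end
end
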